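/- arXiv:1211.4043 — 10 statements merged into one kernel-verified Lean document; each statement's English description precedes it below -/
import Mathlib

section
/- For every real number r > 0, the sum over k ≥ 1 of log(1 − e^{−2πrk}) minus the sum over k ≥ 1 of log(1 − e^{−2πk/r}) equals (1/2)·[(π/6)(r − 1/r) − log r]. Equivalently, log φ(e^{−2πr}) − log φ(e^{−2π/r}) = (1/2)[(π/6)(r − 1/r) − log r], where φ is the Euler function. -/
open Real

/-!
Up to the factor `q ^ (1 / 24)`, the Euler function at `q = exp (2 π i z)` is the Dedekind eta
function, for which `η (-1 / z) = (√i)⁻¹ √z η z`. Taking `log ‖·‖` removes the branches of the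
square roots and leaves an identity of real numbers, in which `‖q ^ (1 / 24)‖` accounts for the
terms with `π / 12` and `√z` for the logarithm. The point `z = r i` has `-1 / z = r⁻¹ i`.
-/

/-- The Euler function `φ q = ∏_{k ≥ 1} (1 - q ^ k)`, through which the Dedekind eta function is
related to the sums `∑ log (1 - q ^ k)`. The index is shifted to start at `0`, and the value is the
junk value `1` where the product does not converge. -/
noncomputable def eulerFunction {R : Type*} [CommRing R] [TopologicalSpace R] (q : R) : R :=
  ∏' k : ℕ, (1 - q ^ (k + 1))

lemma one_sub_pow_succ_ne_zero {R : Type*} [NormedRing R] [NormOneClass R] {q : R} (hq : ‖q‖ < 1)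
    (k : ℕ) : 1 - q ^ (k + 1) ≠ 0 := by
  intro h
  have hnorm : ‖q ^ (k + 1)‖ = 1 := by rw [← sub_eq_zero.1 h, norm_one]
  exact ((norm_pow_le q _).trans_lt (pow_lt_one₀ (norm_nonneg q) hq k.succ_ne_zero)).ne hnorm

section EulerFunction

variable {ι R : Type*} [NormedCommRing R] [NormOneClass R] [NormMulClass R] [CompleteSpace R]

lemma log_norm_tprod_one_add {f : ι → R} (hf : ∀ i, 1 + f i ≠ 0) (hsum : Summable (‖f ·‖)) :
    log ‖∏' i, (1 + f i)‖ = ∑' i, log ‖1 + f i‖ := by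
  rw [(multipliable_one_add_of_summable hsum).norm_tprod,
    ← rexp_tsum_eq_tprod (fun i ↦ norm_pos_iff.2 (hf i)) hsum.summable_log_norm_one_add, log_exp]

lemma log_norm_eulerFunction {q : R} (hq : ‖q‖ < 1) :
    log ‖eulerFunction q‖ = ∑' k : ℕ, log ‖1 - q ^ (k + 1)‖ := by
  have hsum : Summable fun k : ℕ ↦ ‖-q ^ (k + 1)‖ := by
    simpa only [norm_neg, norm_pow] using
      (summable_nat_add_iff 1).2 (summable_geometric_of_lt_one (norm_nonneg q) hq)
  simpa only [eulerFunction, sub_eq_add_neg] using log_norm_tprod_one_add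
    (fun k ↦ by simpa only [sub_eq_add_neg] using one_sub_pow_succ_ne_zero hq k) hsum

end EulerFunction

lemma log_norm_eulerFunction_ofReal {q : ℝ} (hq : |q| < 1) :
    log ‖eulerFunction (q : ℂ)‖ = ∑' k : ℕ, log (1 - q ^ (k + 1)) := by
  rw [log_norm_eulerFunction (by simpa using hq)]
  refine tsum_congr fun k ↦ ?_
  rw [← log_abs (1 - q ^ (k + 1)), ← norm_eq_abs, ← Complex.norm_real]
  push_cast
  rfl

lemma log_norm_eulerFunction_exp_neg {t : ℝ} (ht : 0 < t) :
    log ‖eulerFunction (Complex.exp (-t))‖ = ∑' k : ℕ, log (1 - exp (-t * (k + 1))) := by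
  have hq : |exp (-t)| < 1 := by simpa using ht
  rw [← Complex.ofReal_neg, ← Complex.ofReal_exp, log_norm_eulerFunction_ofReal hq]
  refine tsum_congr fun k ↦ ?_
  rw [← exp_nat_mul, mul_comm, Nat.cast_succ]

lemma log_norm_eulerFunction_exp_two_pi_I_mul_I {r : ℝ} (hr : 0 < r) :
    log ‖eulerFunction (Complex.exp (2 * π * Complex.I * (r * Complex.I)))‖ =
      ∑' k : ℕ, log (1 - exp (-2 * π * r * (k + 1))) := by
  have hq : 2 * π * Complex.I * (r * Complex.I) = -((2 * π * r : ℝ) : ℂ) := by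
    push_cast
    linear_combination 2 * π * r * Complex.I_sq
  rw [hq, log_norm_eulerFunction_exp_neg (by positivity)]
  simp only [neg_mul]

lemma neg_one_div_ofReal_mul_I (r : ℝ) : -1 / (r * Complex.I) = (r⁻¹ : ℝ) * Complex.I := by
  rw [div_mul_eq_div_div_swap, neg_div, one_div, Complex.inv_I, neg_neg, Complex.ofReal_inv,
    div_eq_inv_mul]

lemma norm_complex_sqrt (z : ℂ) : ‖Complex.sqrt z‖ = √‖z‖ := by
  simpa only [Complex.sqrt, Nat.cast_ofNat, sqrt_eq_rpow, one_div] using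
    Complex.norm_cpow_inv_nat z 2

lemma eta_eq_qParam_mul_eulerFunction (z : ℂ) :
    ModularForm.eta z = Function.Periodic.qParam 24 z *
      eulerFunction (Complex.exp (2 * π * Complex.I * z)) := by
  simp only [ModularForm.eta, ModularForm.eta_q_eq_pow, eulerFunction]

section DedekindEta

variable {z : ℂ}

lemma log_norm_eta (hz : 0 < z.im) :
    log ‖ModularForm.eta z‖ =
      log ‖eulerFunction (Complex.exp (2 * π * Complex.I * z))‖ - π / 12 * z.im := by
  have hη : Function.Periodic.qParam 24 z *
      eulerFunction (Complex.exp (2 * π * Complex.I * z)) ≠ 0 :=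
    eta_eq_qParam_mul_eulerFunction z ▸ ModularForm.eta_ne_zero hz
  rw [eta_eq_qParam_mul_eulerFunction, norm_mul,
    log_mul (norm_ne_zero_iff.2 (left_ne_zero_of_mul hη))
      (norm_ne_zero_iff.2 (right_ne_zero_of_mul hη)),
    Function.Periodic.norm_qParam, log_exp]
  ring

lemma norm_eta_neg_one_div (hz : 0 < z.im) :
    ‖ModularForm.eta (-1 / z)‖ = √‖z‖ * ‖ModularForm.eta z‖ := by
  have hS : ModularForm.eta (-1 / z) =
      (Complex.sqrt Complex.I)⁻¹ * (Complex.sqrt z * ModularForm.eta z) :=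
    ModularForm.eta_comp_eq_csqrt_I_inv hz
  rw [hS, norm_mul, norm_mul, norm_inv, norm_complex_sqrt, norm_complex_sqrt, Complex.norm_I,
    sqrt_one, inv_one, one_mul]

lemma log_norm_eta_neg_one_div (hz : 0 < z.im) :
    log ‖ModularForm.eta (-1 / z)‖ = log ‖z‖ / 2 + log ‖ModularForm.eta z‖ := by
  have hz₀ : 0 < ‖z‖ := norm_pos_iff.2 (by rintro rfl; simp at hz)
  rw [norm_eta_neg_one_div hz, log_mul (sqrt_pos.2 hz₀).ne'
    (norm_ne_zero_iff.2 (ModularForm.eta_ne_zero hz)), log_sqrt hz₀.le]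

end DedekindEta

theorem euler_function_modular_identity_general (z : ℂ) (hz : 0 < z.im) :
    log ‖eulerFunction (Complex.exp (2 * π * Complex.I * z))‖ -
      log ‖eulerFunction (Complex.exp (2 * π * Complex.I * (-1 / z)))‖ =
    (1 / 2) * ((π / 6) * (z.im - (-1 / z).im) - log ‖z‖) := by
  have hSz : 0 < (-1 / z).im := by
    simpa [neg_div, inv_neg] using UpperHalfPlane.im_inv_neg_coe_pos ⟨z, hz⟩
  have hη := log_norm_eta_neg_one_div hz
  rw [log_norm_eta hz, log_norm_eta hSz] at hη
  linarith

/-- For every real `r > 0`,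
`∑_{k≥1} log(1 − e^{−2πrk}) − ∑_{k≥1} log(1 − e^{−2πk/r})
  = (1/2)·[(π/6)(r − 1/r) − log r]`. -/
theorem euler_function_modular_identity (r : ℝ) (hr : 0 < r) :
    (∑' k : ℕ, Real.log (1 - Real.exp (-2 * π * r * (k + 1)))) -
      (∑' k : ℕ, Real.log (1 - Real.exp (-2 * π * (k + 1) / r))) =
    (1 / 2) * ((π / 6) * (r - 1 / r) - Real.log r) := by
  have hz : 0 < (r * Complex.I).im := by simpa using hr
  have hexponent (k : ℕ) : -2 * π * (k + 1) / r = -2 * π * r⁻¹ * (k + 1) := by ring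
  simp only [hexponent]
  rw [← log_norm_eulerFunction_exp_two_pi_I_mul_I hr,
    ← log_norm_eulerFunction_exp_two_pi_I_mul_I (inv_pos.2 hr),
    ← neg_one_div_ofReal_mul_I, euler_function_modular_identity_general _ hz,
    neg_one_div_ofReal_mul_I]
  simp [abs_of_pos hr]
end

section
/- Let u : ℝ → ℝ be continuously differentiable, Q : ℝ → ℝ continuous, and let S₊, S₋ : ℝ → ℝ be continuously differentiable functions both satisfying the Riccati equation S'(x) + S(x)² = Q(x) + u(x)²/4 + u'(x)/2 for all x, with S₊(a) ≠ S₋(a). Define φ(x) = exp(−(1/2)∫_a^x u(σ)dσ) · (exp(∫_a^x S₊(σ)dσ) − exp(∫_a^x S₋(σ)dσ)) / (S₊(a) − S₋(a)). Then φ is twice differentiable and satisfies φ''(x) + u(x)φ'(x) − Q(x)φ(x) = 0 for all x, together with the initial conditions φ(a) = 0 and φ'(a) = 1. -/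
/-!
The product `exp (-½ ∫ u) * exp (∫ S)` is `exp (∫ w)` for `w = S - u / 2`, so its logarithmic
derivative is `w`. A function with logarithmic derivative `w` solves `φ'' + u φ' - Q φ = 0` as soon
as `w' + w² + u w = Q`, and completing the square turns this into the Riccati equation for `S`.
The ODE is linear, so the normalized difference of the two exponentials solves it as well; both are
`1` at `a`, with derivatives there that differ by `S₊ a - S₋ a`.
-/

open NormedSpace (exp)

section LinearODE

variable {𝕜 𝔸 : Type*} [NontriviallyNormedField 𝕜] [NormedCommRing 𝔸] [NormedAlgebra 𝕜 𝔸]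

/-- `φ` is a global solution of the second-order linear equation `φ'' + u φ' - Q φ = 0`.
Differentiability of `φ` and `φ'` is part of the notion, so that `deriv` takes no junk values. -/
structure IsLinearODESolution (u Q φ : 𝕜 → 𝔸) : Prop where
  differentiable : Differentiable 𝕜 φ
  differentiable_deriv : Differentiable 𝕜 (deriv φ)
  deriv_deriv_add_sub : ∀ x, deriv (deriv φ) x + u x * deriv φ x - Q x * φ x = 0

namespace IsLinearODESolution

variable {u Q φ ψ : 𝕜 → 𝔸}

theorem sub (hφ : IsLinearODESolution u Q φ) (hψ : IsLinearODESolution u Q ψ) :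
    IsLinearODESolution u Q (φ - ψ) := by
  have deriv_sub_eq : deriv (φ - ψ) = deriv φ - deriv ψ :=
    funext fun x => deriv_sub (hφ.differentiable x) (hψ.differentiable x)
  refine ⟨hφ.differentiable.sub hψ.differentiable, ?_, fun x => ?_⟩
  · rw [deriv_sub_eq]
    exact hφ.differentiable_deriv.sub hψ.differentiable_deriv
  · rw [deriv_sub_eq, deriv_sub (hφ.differentiable_deriv x) (hψ.differentiable_deriv x)]
    simp only [Pi.sub_apply]
    linear_combination hφ.deriv_deriv_add_sub x - hψ.deriv_deriv_add_sub x

theorem const_mul (c : 𝔸) (hφ : IsLinearODESolution u Q φ) :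
    IsLinearODESolution u Q fun x => c * φ x := by
  have deriv_const_mul_eq : (deriv fun x => c * φ x) = fun x => c * deriv φ x :=
    funext fun x => deriv_const_mul c (hφ.differentiable x)
  refine ⟨hφ.differentiable.const_mul c, ?_, fun x => ?_⟩
  · rw [deriv_const_mul_eq]
    exact hφ.differentiable_deriv.const_mul c
  · rw [deriv_const_mul_eq, deriv_const_mul c (hφ.differentiable_deriv x)]
    linear_combination c * hφ.deriv_deriv_add_sub x

theorem of_hasDerivAt_mul_self {w : 𝕜 → 𝔸} (hφ : ∀ x, HasDerivAt φ (w x * φ x) x)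
    (hw : Differentiable 𝕜 w) (hwQ : ∀ x, deriv w x + w x ^ 2 + u x * w x = Q x) :
    IsLinearODESolution u Q φ := by
  have deriv_eq : deriv φ = fun x => w x * φ x := funext fun x => (hφ x).deriv
  have hasDerivAt_deriv (x : 𝕜) :
      HasDerivAt (deriv φ) (deriv w x * φ x + w x * (w x * φ x)) x := by
    rw [deriv_eq]
    exact (hw x).hasDerivAt.mul (hφ x)
  refine ⟨fun x => (hφ x).differentiableAt, fun x => (hasDerivAt_deriv x).differentiableAt,
    fun x => ?_⟩
  rw [(hasDerivAt_deriv x).deriv, (hφ x).deriv]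
  linear_combination φ x * hwQ x

end IsLinearODESolution

end LinearODE

theorem hasDerivAt_exp_integral {𝔸 : Type*} [NormedCommRing 𝔸] [NormedAlgebra ℝ 𝔸]
    [CompleteSpace 𝔸] {w : ℝ → 𝔸} (hw : Continuous w) (a x : ℝ) :
    HasDerivAt (fun y => exp (∫ σ in a..y, w σ)) (w x * exp (∫ σ in a..x, w σ)) x := by
  have hasDerivAt_integral := (hw.integral_hasStrictDerivAt a x).hasDerivAt
  exact ((hasFDerivAt_exp (𝕂 := ℝ)).comp_hasDerivAt x hasDerivAt_integral).congr_deriv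
    (mul_comm _ _)

section Riccati

variable {𝕜 : Type*} [RCLike 𝕜] {u Q S : ℝ → 𝕜}

theorem exp_neg_half_integral_mul_exp_integral (hu : Continuous u) (hS : Continuous S) (a x : ℝ) :
    exp (-(1 / 2) * ∫ σ in a..x, u σ) * exp (∫ σ in a..x, S σ) =
      exp (∫ σ in a..x, (S σ - u σ / 2)) := by
  rw [← NormedSpace.exp_add, intervalIntegral.integral_sub (hS.intervalIntegrable a x)
    ((hu.div_const 2).intervalIntegrable a x), intervalIntegral.integral_div]
  congr 1
  ring

theorem isLinearODESolution_exp_integral_of_riccati (hu : Differentiable ℝ u)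
    (hS : Differentiable ℝ S)
    (hR : ∀ x, deriv S x + S x ^ 2 = Q x + u x ^ 2 / 4 + deriv u x / 2) (a : ℝ) :
    IsLinearODESolution u Q fun x => exp (∫ σ in a..x, (S σ - u σ / 2)) := by
  have hw : Differentiable ℝ fun x => S x - u x / 2 := hS.sub (hu.div_const 2)
  have deriv_w (x : ℝ) : deriv (fun x => S x - u x / 2) x = deriv S x - deriv u x / 2 :=
    ((hS x).hasDerivAt.sub ((hu x).hasDerivAt.div_const 2)).deriv
  refine .of_hasDerivAt_mul_self (hasDerivAt_exp_integral hw.continuous a) hw fun x => ?_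
  rw [deriv_w]
  linear_combination hR x

theorem riccati_solutions_give_ivp_solution_general {Sp Sm : ℝ → 𝕜} {a : ℝ}
    (hu : Differentiable ℝ u) (hSp : Differentiable ℝ Sp) (hSm : Differentiable ℝ Sm)
    (hRp : ∀ x, deriv Sp x + Sp x ^ 2 = Q x + u x ^ 2 / 4 + deriv u x / 2)
    (hRm : ∀ x, deriv Sm x + Sm x ^ 2 = Q x + u x ^ 2 / 4 + deriv u x / 2)
    (hne : Sp a ≠ Sm a) {φ : ℝ → 𝕜}
    (hφ : ∀ x, φ x = exp (-(1 / 2) * ∫ σ in a..x, u σ) *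
      (exp (∫ σ in a..x, Sp σ) - exp (∫ σ in a..x, Sm σ)) / (Sp a - Sm a)) :
    IsLinearODESolution u Q φ ∧ φ a = 0 ∧ deriv φ a = 1 := by
  let E (S : ℝ → 𝕜) (x : ℝ) : 𝕜 := exp (∫ σ in a..x, (S σ - u σ / 2))
  have φ_eq : φ = fun x => (Sp a - Sm a)⁻¹ * (E Sp - E Sm) x := by
    funext x
    rw [hφ, mul_sub, exp_neg_half_integral_mul_exp_integral hu.continuous hSp.continuous,
      exp_neg_half_integral_mul_exp_integral hu.continuous hSm.continuous, div_eq_inv_mul,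
      Pi.sub_apply]
  have hasDerivAt_E {S : ℝ → 𝕜} (hS : Differentiable ℝ S) :
      HasDerivAt (E S) (S a - u a / 2) a := by
    simpa using hasDerivAt_exp_integral (hS.sub (hu.div_const 2)).continuous a a
  refine ⟨?_, by simp [hφ], ?_⟩
  · rw [φ_eq]
    exact ((isLinearODESolution_exp_integral_of_riccati hu hSp hRp a).sub
      (isLinearODESolution_exp_integral_of_riccati hu hSm hRm a)).const_mul _
  · rw [φ_eq, (((hasDerivAt_E hSp).sub (hasDerivAt_E hSm)).const_mul _).deriv,
      sub_sub_sub_cancel_right, inv_mul_cancel₀ (sub_ne_zero.mpr hne)]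

end Riccati

/-- If `S₊`, `S₋` are C¹ solutions of the Riccati equation `S' + S² = Q + u²/4 + u'/2`
with `S₊(a) ≠ S₋(a)`, then
`φ(x) = e^{−(1/2)∫_a^x u} (e^{∫_a^x S₊} − e^{∫_a^x S₋})/(S₊(a) − S₋(a))`
is twice differentiable, satisfies `φ'' + uφ' − Qφ = 0`, `φ(a) = 0` and `φ'(a) = 1`. -/
theorem riccati_solutions_give_ivp_solution (a : ℝ) (u Q Sp Sm : ℝ → ℝ)
    (hu : ContDiff ℝ 1 u) (hQ : Continuous Q)
    (hSp : ContDiff ℝ 1 Sp) (hSm : ContDiff ℝ 1 Sm)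
    (hRp : ∀ x, deriv Sp x + (Sp x) ^ 2 = Q x + (u x) ^ 2 / 4 + deriv u x / 2)
    (hRm : ∀ x, deriv Sm x + (Sm x) ^ 2 = Q x + (u x) ^ 2 / 4 + deriv u x / 2)
    (hne : Sp a ≠ Sm a)
    (φ : ℝ → ℝ)
    (hφ : ∀ x, φ x = Real.exp (-(1 / 2) * ∫ σ in a..x, u σ) *
      (Real.exp (∫ σ in a..x, Sp σ) - Real.exp (∫ σ in a..x, Sm σ)) / (Sp a - Sm a)) :
    (Differentiable ℝ φ ∧ Differentiable ℝ (deriv φ)) ∧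
      (∀ x, deriv (deriv φ) x + u x * deriv φ x - Q x * φ x = 0) ∧
      φ a = 0 ∧ deriv φ a = 1 := by
  obtain ⟨hODE, hinit⟩ := riccati_solutions_give_ivp_solution_general
    (hu.differentiable one_ne_zero) (hSp.differentiable one_ne_zero)
    (hSm.differentiable one_ne_zero) hRp hRm hne (by simpa only [Real.exp_eq_exp_ℝ] using hφ)
  exact ⟨⟨hODE.differentiable, hODE.differentiable_deriv⟩, hODE.deriv_deriv_add_sub, hinit⟩
end

section
/- Let u : ℝ → ℝ be continuously differentiable, Q : ℝ → ℝ continuous, and let S₁, S₂ : ℝ → ℝ be continuously differentiable with S₁(x) > 0 for all x, such that both S₊ = S₁ + S₂ and S₋ = −S₁ + S₂ satisfy the Riccati equation S'(x) + S(x)² = Q(x) + u(x)²/4 + u'(x)/2 for all x. Let φ be the solution of φ'' + uφ' − Qφ = 0 with φ(a) = 0, φ'(a) = 1. Then for any b ≥ a, φ(b) = exp(∫_a^b (S₁(x) − u(x)/2) dx) · (1 − exp(−2∫_a^b S₁(x)dx)) / (2√(S₁(a) S₁(b))). -/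
/-!
If `S` solves `S' + S² = Q + u²/4 + u'/2`, then `φ'' + uφ' - Qφ` factors as
`(d/dx + u/2 + S) (d/dx + u/2 - S) φ`, so `φ' + (u/2 - S)φ` solves a first-order linear equation
and is known explicitly. Two Riccati solutions give two such first integrals, from which `φ'` is
eliminated. The gap between the two solutions is itself the solution of a first-order linear
equation; this is the origin of the factor `√(S₁(a)S₁(b))`.
-/

open Real

section

variable {E : Type*} [NormedAddCommGroup E] [NormedSpace ℝ E]

theorem exp_integral_eq_mul_of_eq_add {f g h : ℝ → ℝ} (hg : Continuous g) (hh : Continuous h)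
    (hf : ∀ x, f x = g x + h x) (a b : ℝ) :
    exp (∫ x in a..b, f x) = exp (∫ x in a..b, g x) * exp (∫ x in a..b, h x) := by
  simp only [hf]
  rw [intervalIntegral.integral_add (hg.intervalIntegrable a b) (hh.intervalIntegrable a b),
    exp_add]

theorem exp_integral_sub_exp_integral_of_eq_add_two_mul {f g h : ℝ → ℝ} (hg : Continuous g)
    (hh : Continuous h) (hf : ∀ x, f x = g x + 2 * h x) (a b : ℝ) :
    exp (∫ x in a..b, f x) - exp (∫ x in a..b, g x) =
      exp (∫ x in a..b, f x) * (1 - exp (-2 * ∫ x in a..b, h x)) := by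
  have hf_cont : Continuous f := (hg.add (hh.const_mul 2)).congr fun x => (hf x).symm
  rw [exp_integral_eq_mul_of_eq_add (f := g) hf_cont (hh.const_mul (-2))
      (fun x => by linear_combination -hf x),
    intervalIntegral.integral_const_mul, mul_one_sub]

theorem eq_exp_integral_smul_of_hasDerivAt {f : ℝ → E} {g : ℝ → ℝ} (hg : Continuous g)
    (hf : ∀ x, HasDerivAt f (g x • f x) x) (a b : ℝ) :
    f b = exp (∫ x in a..b, g x) • f a := by
  have hasDerivAt_zero (x : ℝ) :
      HasDerivAt (fun y => exp (-∫ t in a..y, g t) • f y) 0 x := by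
    have hexp := (hg.integral_hasStrictDerivAt a x).hasDerivAt.fun_neg.exp
    refine (hexp.fun_smul (hf x)).congr_deriv ?_
    module
  have hconst : exp (-∫ t in a..b, g t) • f b = f a := by
    simpa using is_const_of_deriv_eq_zero (fun x => (hasDerivAt_zero x).differentiableAt)
      (fun x => (hasDerivAt_zero x).deriv) b a
  rw [← hconst, smul_smul, ← exp_add, add_neg_cancel, exp_zero, one_smul]

/-- `S` solves the Riccati equation `S' + S² = R` on the whole line. Differentiability of `S` is
part of the notion. -/
def IsRiccatiSolution (R S : ℝ → ℝ) : Prop :=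
  ∀ x, HasDerivAt S (R x - S x ^ 2) x

namespace IsRiccatiSolution

theorem of_deriv {R S : ℝ → ℝ} (hS : Differentiable ℝ S)
    (hR : ∀ x, deriv S x + S x ^ 2 = R x) : IsRiccatiSolution R S := fun x =>
  (hS x).hasDerivAt.congr_deriv (eq_sub_of_add_eq (hR x))

variable {R S T : ℝ → ℝ}

theorem continuous (hS : IsRiccatiSolution R S) : Continuous S :=
  continuous_iff_continuousAt.2 fun x => (hS x).continuousAt

theorem sub_eq_exp_integral_mul (hS : IsRiccatiSolution R S) (hT : IsRiccatiSolution R T)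
    (a b : ℝ) :
    S b - T b = exp (∫ x in a..b, -(S x + T x)) * (S a - T a) := by
  have hgap (x : ℝ) :
      HasDerivAt (fun y => S y - T y) (-(S x + T x) • (S x - T x)) x := by
    refine ((hS x).fun_sub (hT x)).congr_deriv ?_
    rw [smul_eq_mul]
    ring
  exact eq_exp_integral_smul_of_hasDerivAt (hS.continuous.add hT.continuous).neg hgap a b

theorem sqrt_mul_eq_mul_exp_neg_integral {S₁ S₂ : ℝ → ℝ}
    (hplus : IsRiccatiSolution R (fun x => S₁ x + S₂ x))
    (hminus : IsRiccatiSolution R (fun x => -S₁ x + S₂ x)) {a : ℝ} (ha : 0 ≤ S₁ a) (b : ℝ) :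
    √(S₁ a * S₁ b) = S₁ a * exp (-∫ x in a..b, S₂ x) := by
  have hsum (x : ℝ) : -(S₁ x + S₂ x + (-S₁ x + S₂ x)) = -2 * S₂ x := by ring
  have hS₁b : S₁ b = exp (-2 * ∫ x in a..b, S₂ x) * S₁ a := by
    have hgap := hplus.sub_eq_exp_integral_mul hminus a b
    simp only [hsum, intervalIntegral.integral_const_mul] at hgap
    linarith
  have hsq : S₁ a * S₁ b = (S₁ a * exp (-∫ x in a..b, S₂ x)) ^ 2 := by
    rw [hS₁b, mul_pow, ← exp_nat_mul]
    push_cast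
    ring_nf
  rw [hsq, sqrt_sq (mul_nonneg ha (exp_pos _).le)]

variable {u u' Q : ℝ → ℝ} {φ φ' : ℝ → E}

theorem add_smul_eq_exp_integral_smul
    (hS : IsRiccatiSolution (fun x => Q x + u x ^ 2 / 4 + u' x / 2) S)
    (hu : ∀ x, HasDerivAt u (u' x) x) (hφ : ∀ x, HasDerivAt φ (φ' x) x)
    (hφ' : ∀ x, HasDerivAt φ' (Q x • φ x - u x • φ' x) x) (a b : ℝ) :
    φ' b + (u b / 2 - S b) • φ b =
      exp (∫ x in a..b, (-S x - u x / 2)) • (φ' a + (u a / 2 - S a) • φ a) := by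
  have hfactor (x : ℝ) : HasDerivAt (fun y => φ' y + (u y / 2 - S y) • φ y)
      ((-S x - u x / 2) • (φ' x + (u x / 2 - S x) • φ x)) x := by
    have hcoeff := ((hu x).div_const 2).fun_sub (hS x)
    refine ((hφ' x).fun_add (hcoeff.fun_smul (hφ x))).congr_deriv ?_
    module
  have hu_cont : Continuous u := continuous_iff_continuousAt.2 fun x => (hu x).continuousAt
  exact eq_exp_integral_smul_of_hasDerivAt
    (hS.continuous.neg.sub (hu_cont.div_const 2)) hfactor a b

theorem sub_smul_eq_exp_integral_sub_exp_integral_smul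
    (hS : IsRiccatiSolution (fun x => Q x + u x ^ 2 / 4 + u' x / 2) S)
    (hT : IsRiccatiSolution (fun x => Q x + u x ^ 2 / 4 + u' x / 2) T)
    (hu : ∀ x, HasDerivAt u (u' x) x) (hφ : ∀ x, HasDerivAt φ (φ' x) x)
    (hφ' : ∀ x, HasDerivAt φ' (Q x • φ x - u x • φ' x) x) {a : ℝ} (hφa : φ a = 0) (b : ℝ) :
    (S a - T a) • φ b =
      (exp (∫ x in a..b, (S x - u x / 2)) - exp (∫ x in a..b, (T x - u x / 2))) • φ' a := by
  have hS_cont := hS.continuous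
  have hT_cont := hT.continuous
  have hu_cont : Continuous u := continuous_iff_continuousAt.2 fun x => (hu x).continuousAt
  set G := exp (∫ x in a..b, -(S x + T x))
  have hexpS : exp (∫ x in a..b, (-S x - u x / 2)) =
      G * exp (∫ x in a..b, (T x - u x / 2)) :=
    exp_integral_eq_mul_of_eq_add (by fun_prop) (by fun_prop) (fun x => by ring) a b
  have hexpT : exp (∫ x in a..b, (-T x - u x / 2)) =
      G * exp (∫ x in a..b, (S x - u x / 2)) :=
    exp_integral_eq_mul_of_eq_add (by fun_prop) (by fun_prop) (fun x => by ring) a b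
  have hfirstS := hS.add_smul_eq_exp_integral_smul hu hφ hφ' a b
  have hfirstT := hT.add_smul_eq_exp_integral_smul hu hφ hφ' a b
  rw [hφa, smul_zero, add_zero, hexpS] at hfirstS
  rw [hφa, smul_zero, add_zero, hexpT] at hfirstT
  refine smul_right_injective E (exp_pos _ : 0 < G).ne' ?_
  calc G • (S a - T a) • φ b
      = (S b - T b) • φ b := by rw [smul_smul, ← hS.sub_eq_exp_integral_mul hT a b]
    _ = (φ' b + (u b / 2 - T b) • φ b) - (φ' b + (u b / 2 - S b) • φ b) := by module
    _ = G • (exp (∫ x in a..b, (S x - u x / 2)) - exp (∫ x in a..b, (T x - u x / 2))) • φ' a := by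
        rw [hfirstS, hfirstT]
        module

end IsRiccatiSolution

theorem ivp_solution_via_branches_general {a : ℝ} {u Q S₁ S₂ : ℝ → ℝ}
    (hu : Differentiable ℝ u) (hS₁ : Differentiable ℝ S₁) (hS₂ : Differentiable ℝ S₂)
    (hpos : 0 < S₁ a)
    (hp : ∀ x, deriv (fun y => S₁ y + S₂ y) x + (S₁ x + S₂ x) ^ 2 =
      Q x + (u x) ^ 2 / 4 + deriv u x / 2)
    (hm : ∀ x, deriv (fun y => -S₁ y + S₂ y) x + (-S₁ x + S₂ x) ^ 2 =
      Q x + (u x) ^ 2 / 4 + deriv u x / 2)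
    {φ : ℝ → E} (hφ : Differentiable ℝ φ) (hφ' : Differentiable ℝ (deriv φ))
    (hode : ∀ x, deriv (deriv φ) x + u x • deriv φ x - Q x • φ x = 0)
    (hφa : φ a = 0) (b : ℝ) :
    φ b = (exp (∫ x in a..b, (S₁ x - u x / 2)) * (1 - exp (-2 * ∫ x in a..b, S₁ x)) /
      (2 * √(S₁ a * S₁ b))) • deriv φ a := by
  have hplus := IsRiccatiSolution.of_deriv (hS₁.fun_add hS₂) hp
  have hminus := IsRiccatiSolution.of_deriv (hS₁.fun_neg.fun_add hS₂) hm
  have hφ'' (x : ℝ) : HasDerivAt (deriv φ) (Q x • φ x - u x • deriv φ x) x :=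
    (hφ' x).hasDerivAt.congr_deriv (eq_sub_of_add_eq (sub_eq_zero.1 (hode x)))
  have hbranches := hplus.sub_smul_eq_exp_integral_sub_exp_integral_smul hminus
    (fun x => (hu x).hasDerivAt) (fun x => (hφ x).hasDerivAt) hφ'' hφa b
  have hS₁_cont := hS₁.continuous
  have hS₂_cont := hS₂.continuous
  have hu_cont := hu.continuous
  have hexp : exp (∫ x in a..b, (S₁ x + S₂ x - u x / 2)) -
        exp (∫ x in a..b, (-S₁ x + S₂ x - u x / 2)) =
      exp (∫ x in a..b, S₂ x) * exp (∫ x in a..b, (S₁ x - u x / 2)) *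
        (1 - exp (-2 * ∫ x in a..b, S₁ x)) := by
    rw [← exp_integral_eq_mul_of_eq_add (f := fun x => S₁ x + S₂ x - u x / 2) hS₂_cont
      (by fun_prop) (fun x => by ring)]
    exact exp_integral_sub_exp_integral_of_eq_add_two_mul (by fun_prop) hS₁_cont
      (fun x => by ring) a b
  have hgap : S₁ a + S₂ a - (-S₁ a + S₂ a) = 2 * S₁ a := by ring
  rw [hgap, hexp, ← eq_inv_smul_iff₀ (by positivity), smul_smul] at hbranches
  rw [hbranches, hplus.sqrt_mul_eq_mul_exp_neg_integral hminus hpos.le, exp_neg]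
  congr 1
  field_simp

end

/-- If `S₁ + S₂` and `−S₁ + S₂` both satisfy the Riccati equation
`S' + S² = Q + u²/4 + u'/2`, with `S₁ > 0`, and `φ` solves `φ'' + uφ' − Qφ = 0`,
`φ(a) = 0`, `φ'(a) = 1`, then for `b ≥ a`,
`φ(b) = e^{∫_a^b (S₁ − u/2)} (1 − e^{−2∫_a^b S₁})/(2√(S₁(a)S₁(b)))`. -/
theorem ivp_solution_via_branches (a : ℝ) (u Q S₁ S₂ : ℝ → ℝ)
    (hu : ContDiff ℝ 1 u) (hQ : Continuous Q)
    (hS₁ : ContDiff ℝ 1 S₁) (hS₂ : ContDiff ℝ 1 S₂)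
    (hpos : ∀ x, 0 < S₁ x)
    (hp : ∀ x, deriv (fun y => S₁ y + S₂ y) x + (S₁ x + S₂ x) ^ 2 =
      Q x + (u x) ^ 2 / 4 + deriv u x / 2)
    (hm : ∀ x, deriv (fun y => -S₁ y + S₂ y) x + (-S₁ x + S₂ x) ^ 2 =
      Q x + (u x) ^ 2 / 4 + deriv u x / 2)
    (φ : ℝ → ℝ)
    (hφdiff : Differentiable ℝ φ) (hφdiff2 : Differentiable ℝ (deriv φ))
    (hode : ∀ x, deriv (deriv φ) x + u x * deriv φ x - Q x * φ x = 0)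
    (hφa : φ a = 0) (hφ'a : deriv φ a = 1) :
    ∀ b : ℝ, a ≤ b →
      φ b = Real.exp (∫ x in a..b, (S₁ x - u x / 2)) *
        (1 - Real.exp (-2 * ∫ x in a..b, S₁ x)) /
        (2 * Real.sqrt (S₁ a * S₁ b)) := by
  intro b _
  simpa only [hφ'a, smul_eq_mul, mul_one] using ivp_solution_via_branches_general
    hu.differentiable_one hS₁.differentiable_one hS₂.differentiable_one (hpos a) hp hm
    hφdiff hφdiff2 hode hφa b
end

section
/- Let f : ℝ → ℝ be twice continuously differentiable with f(x) > 0 for all x, let a < b be real numbers, set u(x) = f'(x)/f(x) − f'(x)f''(x)/(1 + f'(x)²), and let k > 0 be a real number. Define φ(x) = (f(a)/√(1 + f'(a)²)) · sinh(k ∫_a^x (√(1 + f'(σ)²)/f(σ)) dσ)/k. Then φ satisfies φ''(x) + u(x)φ'(x) − k²((1 + f'(x)²)/f(x)²)φ(x) = 0 for all x, with φ(a) = 0 and φ'(a) = 1; in particular φ(b) = (f(a)/√(1 + f'(a)²)) · (e^{kA} − e^{−kA})/(2k), where A = ∫_a^b (√(1 + f'(x)²)/f(x)) dx. -/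
/-!
The induced metric `(1 + f'²) dx² + f² dθ²` equals `f² (dt² + dθ²)` in the isothermal coordinate
`t = ∫ √(1 + f'²) / f dx`. Writing `w = t'`, the first-order coefficient of the equation is
`u = -w' / w` and the zeroth-order one is `-k² w²`, so in the variable `t` the equation becomes
`Φ'' = k² Φ`, which is solved by `Φ t = c sinh (k t) / k`.
-/

section ChangeOfVariable

variable {𝕜 E : Type*} [NontriviallyNormedField 𝕜] [NormedAddCommGroup E] [NormedSpace 𝕜 E]
  {Φ : 𝕜 → E} {t : 𝕜 → 𝕜} {x : 𝕜}

theorem deriv_deriv_scomp (hΦ : Differentiable 𝕜 Φ) (ht : Differentiable 𝕜 t)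
    (hΦ' : DifferentiableAt 𝕜 (deriv Φ) (t x)) (ht' : DifferentiableAt 𝕜 (deriv t) x) :
    deriv (deriv (Φ ∘ t)) x =
      deriv t x ^ 2 • deriv (deriv Φ) (t x) + deriv (deriv t) x • deriv Φ (t x) := by
  have deriv_scomp : deriv (Φ ∘ t) = fun y ↦ deriv t y • (deriv Φ ∘ t) y :=
    funext fun y ↦ deriv.scomp y (hΦ (t y)) (ht y)
  have outer : HasDerivAt (deriv Φ ∘ t) (deriv t x • deriv (deriv Φ) (t x)) x :=
    hΦ'.hasDerivAt.scomp x (ht x).hasDerivAt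
  rw [deriv_scomp, (ht'.hasDerivAt.fun_smul outer).deriv, smul_smul, ← sq, Function.comp_apply]

theorem deriv_deriv_scomp_sub_logDeriv_smul (hΦ : Differentiable 𝕜 Φ) (ht : Differentiable 𝕜 t)
    (hΦ' : DifferentiableAt 𝕜 (deriv Φ) (t x)) (ht' : DifferentiableAt 𝕜 (deriv t) x)
    (ht₀ : deriv t x ≠ 0) :
    deriv (deriv (Φ ∘ t)) x - logDeriv (deriv t) x • deriv (Φ ∘ t) x =
      deriv t x ^ 2 • deriv (deriv Φ) (t x) := by
  rw [deriv_deriv_scomp hΦ ht hΦ' ht', deriv.scomp x (hΦ (t x)) (ht x), smul_smul, logDeriv_apply,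
    div_mul_cancel₀ _ ht₀, add_sub_cancel_right]

end ChangeOfVariable

/-- The solution of `Φ'' = k² Φ` with `Φ 0 = 0` and `Φ' 0 = c`, for `k ≠ 0`. -/
noncomputable def sinhSolution (c k s : ℝ) : ℝ :=
  c * Real.sinh (k * s) / k

namespace sinhSolution

variable {c k : ℝ}

theorem apply_zero : sinhSolution c k 0 = 0 := by
  simp [sinhSolution]

theorem eq_exp_sub_exp_neg (s : ℝ) :
    sinhSolution c k s = c * (Real.exp (k * s) - Real.exp (-(k * s))) / (2 * k) := by
  rw [sinhSolution, Real.sinh_eq, mul_div_assoc', div_div]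

theorem hasDerivAt (hk : k ≠ 0) (s : ℝ) :
    HasDerivAt (sinhSolution c k) (c * Real.cosh (k * s)) s :=
  ((((hasDerivAt_id s).const_mul k).sinh.const_mul c).div_const k).congr_deriv <| by
    simp only [id]
    field_simp

theorem deriv_eq (hk : k ≠ 0) : deriv (sinhSolution c k) = fun s ↦ c * Real.cosh (k * s) :=
  funext fun s ↦ (hasDerivAt hk s).deriv

theorem hasDerivAt_deriv (hk : k ≠ 0) (s : ℝ) :
    HasDerivAt (deriv (sinhSolution c k)) (k ^ 2 * sinhSolution c k s) s := by
  rw [deriv_eq hk]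
  refine (((hasDerivAt_id s).const_mul k).cosh.const_mul c).congr_deriv ?_
  simp only [id, sinhSolution]
  field_simp

section IntegralCoordinate

variable {w : ℝ → ℝ} {a x : ℝ}

theorem deriv_comp_integral_self (hk : k ≠ 0) (hw : Continuous w) :
    deriv (fun x ↦ sinhSolution c k (∫ σ in a..x, w σ)) a = c * w a := by
  have integral_hasDerivAt := (hw.integral_hasStrictDerivAt a a).hasDerivAt
  refine ((hasDerivAt hk _).comp a integral_hasDerivAt).deriv.trans ?_
  rw [intervalIntegral.integral_same, mul_zero, Real.cosh_zero, mul_one]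

theorem deriv_deriv_comp_integral_sub_logDeriv_mul (hk : k ≠ 0) (hw : Differentiable ℝ w)
    (hwx : w x ≠ 0) :
    deriv (deriv fun x ↦ sinhSolution c k (∫ σ in a..x, w σ)) x -
        logDeriv w x * deriv (fun x ↦ sinhSolution c k (∫ σ in a..x, w σ)) x =
      k ^ 2 * w x ^ 2 * sinhSolution c k (∫ σ in a..x, w σ) := by
  set t : ℝ → ℝ := fun x ↦ ∫ σ in a..x, w σ
  have ht : Differentiable ℝ t := fun y ↦
    (hw.continuous.integral_hasStrictDerivAt a y).hasDerivAt.differentiableAt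
  have deriv_t : deriv t = w := funext (hw.continuous.deriv_integral w a)
  have transformed := deriv_deriv_scomp_sub_logDeriv_smul (x := x)
    (fun s ↦ (hasDerivAt (c := c) hk s).differentiableAt) ht
    (hasDerivAt_deriv hk (t x)).differentiableAt (deriv_t ▸ hw x) (deriv_t ▸ hwx)
  rw [deriv_t, (hasDerivAt_deriv hk (t x)).deriv, smul_eq_mul, smul_eq_mul] at transformed
  exact transformed.trans (by ring)

end IntegralCoordinate

end sinhSolution

theorem logDeriv_sqrt {g : ℝ → ℝ} {x : ℝ} (hg : DifferentiableAt ℝ g x) (hgx : 0 < g x) :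
    logDeriv (fun y ↦ √(g y)) x = logDeriv g x / 2 := by
  rw [logDeriv_apply, logDeriv_apply, deriv_sqrt hg hgx.ne', div_div, mul_assoc,
    Real.mul_self_sqrt hgx.le, div_div, mul_comm]

/-- The density `dt/dx = √(1 + f'²) / f` of the isothermal coordinate `t` on the surface of
revolution with profile `f`. -/
noncomputable def isothermalDensity (f : ℝ → ℝ) (x : ℝ) : ℝ :=
  √(1 + deriv f x ^ 2) / f x

section IsothermalDensity

variable {f : ℝ → ℝ} {x : ℝ}

theorem isothermalDensity_ne_zero (hfx : f x ≠ 0) : isothermalDensity f x ≠ 0 :=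
  div_ne_zero (by positivity) hfx

theorem isothermalDensity_sq : isothermalDensity f x ^ 2 = (1 + deriv f x ^ 2) / f x ^ 2 := by
  rw [isothermalDensity, div_pow, Real.sq_sqrt (by positivity)]

theorem differentiableAt_isothermalDensity (hf : DifferentiableAt ℝ f x)
    (hf' : DifferentiableAt ℝ (deriv f) x) (hfx : f x ≠ 0) :
    DifferentiableAt ℝ (isothermalDensity f) x :=
  (((hf'.fun_pow 2).const_add 1).sqrt (by positivity)).fun_div hf hfx

theorem logDeriv_isothermalDensity (hf : DifferentiableAt ℝ f x)
    (hf' : DifferentiableAt ℝ (deriv f) x) (hfx : f x ≠ 0) :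
    logDeriv (isothermalDensity f) x =
      deriv f x * deriv (deriv f) x / (1 + deriv f x ^ 2) - deriv f x / f x := by
  have radicand_hasDerivAt : HasDerivAt (fun y ↦ 1 + deriv f y ^ 2)
      (2 * deriv f x * deriv (deriv f) x) x := by
    simpa using (hf'.hasDerivAt.fun_pow 2).const_add 1
  have radicand_differentiableAt := radicand_hasDerivAt.differentiableAt
  calc logDeriv (isothermalDensity f) x
      = logDeriv (fun y ↦ √(1 + deriv f y ^ 2)) x - logDeriv f x :=
        logDeriv_div x (by positivity) hfx (radicand_differentiableAt.sqrt (by positivity)) hf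
    _ = 2 * deriv f x * deriv (deriv f) x / (1 + deriv f x ^ 2) / 2 - deriv f x / f x := by
        rw [logDeriv_sqrt radicand_differentiableAt (by positivity), logDeriv_apply,
          radicand_hasDerivAt.deriv, logDeriv_apply]
    _ = deriv f x * deriv (deriv f) x / (1 + deriv f x ^ 2) - deriv f x / f x := by ring

end IsothermalDensity

/-- For `f` C² positive, `u = f'/f − f'f''/(1+f'²)` and `k > 0`, the function
`φ(x) = (f(a)/√(1+f'(a)²)) sinh(k∫_a^x √(1+f'²)/f)/k` solves
`φ'' + uφ' − k²((1+f'²)/f²)φ = 0` with `φ(a) = 0`, `φ'(a) = 1`, and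
`φ(b) = (f(a)/√(1+f'(a)²))·(e^{kA} − e^{−kA})/(2k)` where `A = ∫_a^b √(1+f'²)/f`. -/
theorem angular_mode_exact_solution (f : ℝ → ℝ) (hf : ContDiff ℝ 2 f)
    (hfpos : ∀ x, 0 < f x) (a b : ℝ) (hab : a < b)
    (u : ℝ → ℝ)
    (hu : ∀ x, u x = deriv f x / f x -
      deriv f x * deriv (deriv f) x / (1 + (deriv f x) ^ 2))
    (k : ℝ) (hk : 0 < k)
    (φ : ℝ → ℝ)
    (hφ : ∀ x, φ x = (f a / Real.sqrt (1 + (deriv f a) ^ 2)) *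
      Real.sinh (k * ∫ σ in a..x, Real.sqrt (1 + (deriv f σ) ^ 2) / f σ) / k) :
    (∀ x, deriv (deriv φ) x + u x * deriv φ x -
        k ^ 2 * ((1 + (deriv f x) ^ 2) / (f x) ^ 2) * φ x = 0) ∧
      φ a = 0 ∧ deriv φ a = 1 ∧
      φ b = (f a / Real.sqrt (1 + (deriv f a) ^ 2)) *
        (Real.exp (k * ∫ x in a..b, Real.sqrt (1 + (deriv f x) ^ 2) / f x) -
          Real.exp (-(k * ∫ x in a..b, Real.sqrt (1 + (deriv f x) ^ 2) / f x))) /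
        (2 * k) := by
  have hf₁ : Differentiable ℝ f := hf.differentiable two_ne_zero
  have hf₂ : Differentiable ℝ (deriv f) := hf.differentiable_deriv_two
  have hf₀ : ∀ x, f x ≠ 0 := fun x ↦ (hfpos x).ne'
  have hw : Differentiable ℝ (isothermalDensity f) := fun x ↦
    differentiableAt_isothermalDensity (hf₁ x) (hf₂ x) (hf₀ x)
  obtain rfl : φ = fun x ↦ sinhSolution (f a / √(1 + deriv f a ^ 2)) k
      (∫ σ in a..x, isothermalDensity f σ) := funext hφ
  refine ⟨fun x ↦ ?_, ?_, ?_, sinhSolution.eq_exp_sub_exp_neg _⟩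
  · have ode := sinhSolution.deriv_deriv_comp_integral_sub_logDeriv_mul
      (c := f a / √(1 + deriv f a ^ 2)) (a := a) hk.ne' hw (isothermalDensity_ne_zero (hf₀ x))
    rw [logDeriv_isothermalDensity (hf₁ x) (hf₂ x) (hf₀ x), isothermalDensity_sq] at ode
    rw [hu]
    linear_combination ode
  · simp only [intervalIntegral.integral_same, sinhSolution.apply_zero]
  · rw [sinhSolution.deriv_comp_integral_self hk.ne' hw.continuous, ← inv_div]
    exact inv_mul_cancel₀ (isothermalDensity_ne_zero (hf₀ a))
end

section
/- Let L > 0 be real and let s be a complex number with Re(s) > 1. Then for each n ≥ 1 the function k ↦ (k² + (nπ/L)²)^{−s} is integrable over ℝ, the resulting series over n converges absolutely, and ∑_{n=1}^∞ ∫_{−∞}^∞ (k² + (nπ/L)²)^{−s} dk = √π · ζ(2s−1) · (Γ(s − 1/2)/Γ(s)) · (L/π)^{2s−1}. -/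
open Real Complex

/-!
Let `V` be the space of momenta along the stripe and `d` its dimension (`d = 1` in the plane).
Represent `Γ(s) r⁻ˢ` as `∫₀^∞ tˢ⁻¹ e^{-rt} dt`. For `r = ‖x‖² + c` the integral over `x : V` is
Gaussian and turns `tˢ⁻¹` into `π^{d/2} t^{s-d/2-1}`, so by Fubini
`Γ(s) ∫ (‖x‖² + c)⁻ˢ dx = π^{d/2} Γ(s - d/2) c^{d/2-s}`. At `c = (nπ/L)²` this is a multiple of
`(nπ/L)^{-(2s-d)}`, and the sum over `n` is a zeta series.
-/

open MeasureTheory Set Module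

/-- The integrand `tˢ⁻¹ e^{-rt}` of the Schwinger parametrisation
`Γ(s) r⁻ˢ = ∫₀^∞ tˢ⁻¹ e^{-rt} dt`; only its values at `t > 0` matter. -/
noncomputable def schwingerKernel (s : ℂ) (r t : ℝ) : ℂ :=
  (t : ℂ) ^ (s - 1) * cexp (-(r * t))

namespace schwingerKernel

theorem integral_Ioi {s : ℂ} {r : ℝ} (hs : 0 < s.re) (hr : 0 < r) :
    ∫ t in Ioi 0, schwingerKernel s r t = (r : ℂ) ^ (-s) * Complex.Gamma s := by
  simp only [schwingerKernel]
  rw [integral_cpow_mul_exp_neg_mul_Ioi hs hr, one_div, inv_cpow_ofReal_nonneg hr.le, cpow_neg]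

theorem norm_eq_rpow_mul_exp (s : ℂ) (r : ℝ) {t : ℝ} (ht : 0 < t) :
    ‖schwingerKernel s r t‖ = t ^ (s.re - 1) * rexp (-(r * t)) := by
  simp [schwingerKernel, norm_cpow_eq_rpow_re_of_pos ht, Complex.norm_exp]

theorem ofReal_norm (s : ℂ) (r : ℝ) {t : ℝ} (ht : 0 < t) :
    (‖schwingerKernel s r t‖ : ℂ) = schwingerKernel s.re r t := by
  rw [norm_eq_rpow_mul_exp s r ht]
  simp [schwingerKernel, ofReal_cpow ht.le]

theorem measurable_uncurry (s : ℂ) : Measurable (Function.uncurry (schwingerKernel s)) := by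
  unfold Function.uncurry schwingerKernel
  fun_prop

theorem integrableOn_Ioi {s : ℂ} {r : ℝ} (hs : 0 < s.re) (hr : 0 < r) :
    IntegrableOn (schwingerKernel s r) (Ioi 0) := by
  have real_integrable : IntegrableOn (fun t ↦ t ^ (s.re - 1) * rexp (-(r * t))) (Ioi 0) := by
    simpa using integrableOn_rpow_mul_exp_neg_mul_rpow (by linarith) one_pos hr
  refine real_integrable.mono'
    (measurable_uncurry s).of_uncurry_left.aestronglyMeasurable ?_
  filter_upwards [self_mem_ae_restrict measurableSet_Ioi] with t ht
  exact (norm_eq_rpow_mul_exp s r ht).le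

theorem add_rate (s : ℂ) (q r t : ℝ) :
    schwingerKernel s (q + r) t = schwingerKernel s r t * cexp (-t * q) := by
  simp only [schwingerKernel, mul_assoc, ← Complex.exp_add]
  push_cast
  ring_nf

section NormSq

variable {V : Type*} [NormedAddCommGroup V] [InnerProductSpace ℝ V] [FiniteDimensional ℝ V]
  [MeasurableSpace V] [BorelSpace V]

theorem integrable_norm_sq_add (s : ℂ) (c : ℝ) {t : ℝ} (ht : 0 < t) :
    Integrable fun x : V ↦ schwingerKernel s (‖x‖ ^ 2 + c) t := by
  have gaussian_integrable : Integrable fun x : V ↦ cexp (-t * ‖x‖ ^ 2) := by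
    simpa using GaussianFourier.integrable_cexp_neg_mul_sq_norm_add (b := t) (by simpa) 0 (0 : V)
  simpa only [add_rate, ofReal_pow] using gaussian_integrable.const_mul _

theorem integral_norm_sq_add (s : ℂ) (c : ℝ) {t : ℝ} (ht : 0 < t) :
    ∫ x : V, schwingerKernel s (‖x‖ ^ 2 + c) t =
      (π : ℂ) ^ (finrank ℝ V / 2 : ℂ) * schwingerKernel (s - finrank ℝ V / 2) c t := by
  simp only [add_rate, ofReal_pow]
  rw [integral_const_mul, GaussianFourier.integral_cexp_neg_mul_sq_norm (by simpa),
    div_cpow_ofReal_nonneg pi_pos.le ht.le, schwingerKernel, schwingerKernel, sub_right_comm,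
    cpow_sub (s - 1) _ (ofReal_ne_zero.mpr ht.ne')]
  ring

theorem integral_norm_norm_sq_add (s : ℂ) (c : ℝ) {t : ℝ} (ht : 0 < t) :
    ∫ x : V, ‖schwingerKernel s (‖x‖ ^ 2 + c) t‖ =
      π ^ (finrank ℝ V / 2 : ℝ) * ‖schwingerKernel (s - finrank ℝ V / 2) c t‖ := by
  rw [← ofReal_inj, ← integral_complex_ofReal]
  simp only [ofReal_norm _ _ ht, integral_norm_sq_add _ _ ht, ofReal_mul, ofReal_cpow pi_pos.le]
  simp

theorem integrable_prod {s : ℂ} {c : ℝ} (hs : finrank ℝ V / 2 < s.re) (hc : 0 < c) :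
    Integrable (fun p : V × ℝ ↦ schwingerKernel s (‖p.1‖ ^ 2 + c) p.2)
      (volume.prod (volume.restrict (Ioi 0))) := by
  have measurable_kernel :
      Measurable fun p : V × ℝ ↦ schwingerKernel s (‖p.1‖ ^ 2 + c) p.2 :=
    (measurable_uncurry s).comp (f := fun p : V × ℝ ↦ (‖p.1‖ ^ 2 + c, p.2)) (by fun_prop)
  have integrable_marginal :
      IntegrableOn (fun t ↦ ∫ x : V, ‖schwingerKernel s (‖x‖ ^ 2 + c) t‖) (Ioi 0) := by
    refine IntegrableOn.congr_fun (Integrable.const_mul (integrableOn_Ioi ?_ hc).norm _)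
      (fun t ht ↦ (integral_norm_norm_sq_add s c ht).symm) measurableSet_Ioi
    simpa using hs
  refine (integrable_prod_iff' measurable_kernel.aestronglyMeasurable).mpr
    ⟨?_, integrable_marginal⟩
  filter_upwards [self_mem_ae_restrict measurableSet_Ioi] with t ht
  exact integrable_norm_sq_add s c ht

end NormSq

end schwingerKernel

theorem hasSum_nat_add_one_mul_cpow_neg {w : ℂ} (hw : 1 < w.re) {a : ℝ} (ha : 0 ≤ a) :
    HasSum (fun n : ℕ ↦ ((((n : ℝ) + 1) * a : ℝ) : ℂ) ^ (-w))
      (riemannZeta w * (a : ℂ) ^ (-w)) := by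
  have zeta_summable : Summable fun n : ℕ ↦ 1 / ((n : ℂ) + 1) ^ w := by
    simpa using (summable_nat_add_iff 1).mpr (summable_one_div_nat_cpow.mpr hw)
  have zeta_hasSum : HasSum (fun n : ℕ ↦ 1 / ((n : ℂ) + 1) ^ w) (riemannZeta w) :=
    zeta_eq_tsum_one_div_nat_add_one_cpow hw ▸ zeta_summable.hasSum
  refine (zeta_hasSum.mul_right _).congr_fun fun n ↦ ?_
  rw [ofReal_mul, mul_cpow_ofReal_nonneg (by positivity) ha, cpow_neg, one_div]
  simp

section NormSqAddCpow

variable {V : Type*} [NormedAddCommGroup V] [InnerProductSpace ℝ V] [FiniteDimensional ℝ V]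
  [MeasurableSpace V] [BorelSpace V] {s : ℂ}

theorem integrable_norm_sq_add_cpow_neg {c : ℝ} (hs : finrank ℝ V / 2 < s.re) (hc : 0 < c) :
    Integrable fun x : V ↦ ((‖x‖ ^ 2 + c : ℝ) : ℂ) ^ (-s) := by
  have hs_pos : 0 < s.re := lt_of_le_of_lt (by positivity) hs
  have integrable_mul_Gamma :
      Integrable fun x : V ↦ ((‖x‖ ^ 2 + c : ℝ) : ℂ) ^ (-s) * Complex.Gamma s := by
    refine (schwingerKernel.integrable_prod hs hc).integral_prod_left.congr (.of_forall fun x ↦ ?_)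
    exact schwingerKernel.integral_Ioi (r := ‖x‖ ^ 2 + c) hs_pos (by positivity)
  exact (integrable_mul_const_iff (Gamma_ne_zero_of_re_pos hs_pos).isUnit _).mp integrable_mul_Gamma

theorem integral_norm_sq_add_cpow_neg {c : ℝ} (hs : finrank ℝ V / 2 < s.re) (hc : 0 < c) :
    ∫ x : V, ((‖x‖ ^ 2 + c : ℝ) : ℂ) ^ (-s) =
      (π : ℂ) ^ (finrank ℝ V / 2 : ℂ) *
        (Complex.Gamma (s - finrank ℝ V / 2) / Complex.Gamma s) *
          (c : ℂ) ^ (-(s - finrank ℝ V / 2)) := by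
  have hs_pos : 0 < s.re := lt_of_le_of_lt (by positivity) hs
  rw [mul_div_assoc', div_mul_eq_mul_div, eq_div_iff (Gamma_ne_zero_of_re_pos hs_pos)]
  calc
    (∫ x : V, ((‖x‖ ^ 2 + c : ℝ) : ℂ) ^ (-s)) * Complex.Gamma s
      = ∫ x : V, ∫ t in Ioi 0, schwingerKernel s (‖x‖ ^ 2 + c) t := by
        rw [← integral_mul_const]
        exact integral_congr_ae (.of_forall fun x ↦
          (schwingerKernel.integral_Ioi hs_pos (by positivity)).symm)
    _ = ∫ t in Ioi 0, ∫ x : V, schwingerKernel s (‖x‖ ^ 2 + c) t :=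
        integral_integral_swap (schwingerKernel.integrable_prod hs hc)
    _ = ∫ t in Ioi 0, (π : ℂ) ^ (finrank ℝ V / 2 : ℂ) *
          schwingerKernel (s - finrank ℝ V / 2) c t :=
        setIntegral_congr_fun measurableSet_Ioi
          fun t ht ↦ schwingerKernel.integral_norm_sq_add s c ht
    _ = _ := by
        rw [integral_const_mul, schwingerKernel.integral_Ioi (by simpa using hs) hc]
        ring

theorem integral_norm_sq_add_sq_cpow_neg {a : ℝ} (hs : finrank ℝ V / 2 < s.re) (ha : 0 < a) :
    ∫ x : V, ((‖x‖ ^ 2 + a ^ 2 : ℝ) : ℂ) ^ (-s) =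
      (π : ℂ) ^ (finrank ℝ V / 2 : ℂ) *
        (Complex.Gamma (s - finrank ℝ V / 2) / Complex.Gamma s) *
          (a : ℂ) ^ (-(2 * s - finrank ℝ V)) := by
  have sq_cpow (z : ℂ) : ((a ^ 2 : ℝ) : ℂ) ^ z = (a : ℂ) ^ (2 * z) := by
    rw [sq, ofReal_mul, mul_cpow_ofReal_nonneg ha.le ha.le,
      ← cpow_add _ _ (ofReal_ne_zero.mpr ha.ne'), two_mul]
  rw [integral_norm_sq_add_cpow_neg hs (by positivity), sq_cpow]
  ring_nf

theorem hasSum_integral_norm_sq_add_sq_cpow_neg {a : ℝ} (hs : (finrank ℝ V + 1) / 2 < s.re)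
    (ha : 0 < a) :
    HasSum (fun n : ℕ ↦ ∫ x : V, ((‖x‖ ^ 2 + (((n : ℝ) + 1) * a) ^ 2 : ℝ) : ℂ) ^ (-s))
      ((π : ℂ) ^ (finrank ℝ V / 2 : ℂ) *
        (Complex.Gamma (s - finrank ℝ V / 2) / Complex.Gamma s) *
          (riemannZeta (2 * s - finrank ℝ V) * (a : ℂ) ^ (-(2 * s - finrank ℝ V)))) := by
  have hs_integral : finrank ℝ V / 2 < s.re := by linarith
  have hs_zeta : 1 < (2 * s - finrank ℝ V).re := by
    simp only [sub_re, mul_re, re_ofNat, im_ofNat, zero_mul, sub_zero, natCast_re]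
    linarith
  exact ((hasSum_nat_add_one_mul_cpow_neg hs_zeta ha.le).mul_left _).congr_fun
    fun n ↦ integral_norm_sq_add_sq_cpow_neg hs_integral (by positivity)

end NormSqAddCpow

theorem stripe_zeta_density_general {V : Type*} [NormedAddCommGroup V] [InnerProductSpace ℝ V]
    [FiniteDimensional ℝ V] [MeasurableSpace V] [BorelSpace V] (L : ℝ) (hL : 0 < L) (s : ℂ)
    (hs : (finrank ℝ V + 1) / 2 < s.re) :
    (∀ n : ℕ, 1 ≤ n →
        Integrable fun k : V ↦ ((‖k‖ ^ 2 + ((n : ℝ) * π / L) ^ 2 : ℝ) : ℂ) ^ (-s)) ∧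
      Summable (fun n : ℕ ↦
        ‖∫ k : V, ((‖k‖ ^ 2 + (((n : ℝ) + 1) * π / L) ^ 2 : ℝ) : ℂ) ^ (-s)‖) ∧
      (∑' n : ℕ, ∫ k : V, ((‖k‖ ^ 2 + (((n : ℝ) + 1) * π / L) ^ 2 : ℝ) : ℂ) ^ (-s)) =
        (π : ℂ) ^ (finrank ℝ V / 2 : ℂ) * riemannZeta (2 * s - finrank ℝ V) *
          (Complex.Gamma (s - finrank ℝ V / 2) / Complex.Gamma s) *
          ((L / π : ℝ) : ℂ) ^ (2 * s - finrank ℝ V) := by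
  have hs_integral : finrank ℝ V / 2 < s.re := by linarith
  have density_hasSum :=
    hasSum_integral_norm_sq_add_sq_cpow_neg (V := V) hs (div_pos pi_pos hL)
  simp only [← mul_div_assoc] at density_hasSum
  refine ⟨fun n hn ↦ integrable_norm_sq_add_cpow_neg hs_integral (by positivity),
    density_hasSum.summable.norm, ?_⟩
  rw [density_hasSum.tsum_eq, ← inv_div L π, ofReal_inv,
    inv_cpow_ofReal_nonneg (by positivity), cpow_neg, inv_inv]
  ring

/-- Zeta function density of the Dirichlet Laplacian on an infinite planar stripe of
width `L`: for `Re s > 1`, each `k ↦ (k² + (nπ/L)²)^{−s}` is integrable, the series of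
the integrals converges absolutely, and
`∑_{n=1}^∞ ∫_ℝ (k² + (nπ/L)²)^{−s} dk = √π ζ(2s−1) (Γ(s−1/2)/Γ(s)) (L/π)^{2s−1}`. -/
theorem stripe_zeta_density (L : ℝ) (hL : 0 < L) (s : ℂ) (hs : 1 < s.re) :
    (∀ n : ℕ, 1 ≤ n →
        MeasureTheory.Integrable
          (fun k : ℝ => ((k ^ 2 + ((n : ℝ) * π / L) ^ 2 : ℝ) : ℂ) ^ (-s))) ∧
      Summable (fun n : ℕ =>
        ‖∫ k : ℝ, ((k ^ 2 + (((n : ℝ) + 1) * π / L) ^ 2 : ℝ) : ℂ) ^ (-s)‖) ∧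
      (∑' n : ℕ, ∫ k : ℝ, ((k ^ 2 + (((n : ℝ) + 1) * π / L) ^ 2 : ℝ) : ℂ) ^ (-s)) =
        ((Real.sqrt π : ℝ) : ℂ) * riemannZeta (2 * s - 1) *
          (Complex.Gamma (s - 1 / 2) / Complex.Gamma s) *
          ((L / π : ℝ) : ℂ) ^ (2 * s - 1) := by
  have sqrt_pi : (√π : ℂ) = (π : ℂ) ^ (1 / 2 : ℂ) := by
    simp [sqrt_eq_rpow, ofReal_cpow pi_pos.le]
  simpa [sqrt_pi] using stripe_zeta_density_general (V := ℝ) L hL s (by simpa using hs)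
end

section
/- Let L > 0 be real and define F(s) = √π · ζ(2s−1) · (Γ(s − 1/2)/Γ(s)) · (L/π)^{2s−1} for complex s. Then (s − 1)·F(s) tends to L/2 as s → 1 (s ≠ 1); i.e., the residue of F at its simple pole s = 1 equals L/2. -/
open Real Complex Filter

open scoped Topology

/-!
Under the local change of variables `w = 2 * s - 1` the simple pole of `ζ` at `w = 1`, of residue
`1`, becomes a simple pole at `s = 1` of residue `1 / 2`. The other factors of `F` are continuous
at `s = 1`, where their product is `√π * Γ(1 / 2) * (L / π) = L`.
-/

theorem tendsto_sub_mul_comp_of_hasDerivAt {𝕜 : Type*} [NontriviallyNormedField 𝕜]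
    {f g : 𝕜 → 𝕜} {f' r x : 𝕜} (hf : HasDerivAt f f' x) (hf' : f' ≠ 0)
    (hg : Tendsto (fun w ↦ (w - f x) * g w) (𝓝[≠] f x) (𝓝 r)) :
    Tendsto (fun z ↦ (z - x) * g (f z)) (𝓝[≠] x) (𝓝 (r / f')) := by
  have hf_punctured : Tendsto f (𝓝[≠] x) (𝓝[≠] f x) := hf.tendsto_nhdsNE hf'
  have hquot : Tendsto (fun z ↦ (f z - f x) * g (f z) / slope f x z) (𝓝[≠] x) (𝓝 (r / f')) :=
    (hg.comp hf_punctured).div hf.tendsto_slope hf'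
  refine hquot.congr' ?_
  filter_upwards [hf_punctured self_mem_nhdsWithin] with z hz
  have hfz : f z - f x ≠ 0 := sub_ne_zero.mpr hz
  rw [slope_def_field]
  field_simp

theorem tendsto_sub_mul_riemannZeta_comp {f : ℂ → ℂ} {f' x : ℂ} (hf : HasDerivAt f f' x)
    (hf' : f' ≠ 0) (hx : f x = 1) :
    Tendsto (fun s ↦ (s - x) * riemannZeta (f s)) (𝓝[≠] x) (𝓝 (1 / f')) :=
  tendsto_sub_mul_comp_of_hasDerivAt hf hf' (by simpa only [hx] using riemannZeta_residue_one)

-- `1 / Γ` is entire, so only the poles of the numerator have to be avoided.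
theorem continuousAt_Gamma_sub_div_Gamma {a s : ℂ} (hs : ∀ m : ℕ, s - a ≠ -m) :
    ContinuousAt (fun z ↦ Complex.Gamma (z - a) / Complex.Gamma z) s := by
  have hnum : ContinuousAt (fun z ↦ Complex.Gamma (z - a)) s :=
    (Complex.continuousAt_Gamma _ hs).comp (f := fun z ↦ z - a) (by fun_prop)
  simp only [div_eq_mul_inv]
  exact hnum.mul Complex.differentiable_one_div_Gamma.continuous.continuousAt

theorem ofReal_sqrt_pi_mul_Gamma_one_half :
    ((√π : ℝ) : ℂ) * Complex.Gamma (1 / 2) = π := by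
  have hGamma : Complex.Gamma (1 / 2) = ((√π : ℝ) : ℂ) := by
    rw [← Real.Gamma_one_half_eq, ← Complex.Gamma_ofReal]
    norm_num
  rw [hGamma, ← ofReal_mul, Real.mul_self_sqrt pi_nonneg]

theorem tendsto_sqrt_pi_mul_Gamma_div_Gamma_mul_cpow (a : ℂ) :
    Tendsto (fun s : ℂ ↦ ((√π : ℝ) : ℂ) * (Complex.Gamma (s - 1 / 2) / Complex.Gamma s) *
      a ^ (2 * s - 1)) (𝓝 1) (𝓝 (π * a)) := by
  have hhalf : (1 : ℂ) - 1 / 2 = 1 / 2 := by norm_num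
  have hone : 2 * (1 : ℂ) - 1 = 1 := by norm_num
  have hpole (m : ℕ) : (1 : ℂ) - 1 / 2 ≠ -m := by
    rw [hhalf]
    intro h
    have hre : (1 / 2 : ℝ) = -m := by simpa using congrArg Complex.re h
    linarith [m.cast_nonneg (α := ℝ)]
  have hcpow : ContinuousAt (fun s : ℂ ↦ a ^ (2 * s - 1)) 1 :=
    ContinuousAt.const_cpow (by fun_prop) (Or.inr (by norm_num))
  have hGamma := continuousAt_Gamma_sub_div_Gamma hpole
  have hlim := (hGamma.tendsto.const_mul ((√π : ℝ) : ℂ)).mul hcpow.tendsto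
  simpa only [hhalf, hone, Complex.Gamma_one, div_one, cpow_one,
    ofReal_sqrt_pi_mul_Gamma_one_half] using hlim

theorem stripe_zeta_residue_at_one_general (L : ℂ) (F : ℂ → ℂ)
    (hF : ∀ s : ℂ, F s = ((√π : ℝ) : ℂ) * riemannZeta (2 * s - 1) *
      (Complex.Gamma (s - 1 / 2) / Complex.Gamma s) * (L / π) ^ (2 * s - 1)) :
    Tendsto (fun s : ℂ ↦ (s - 1) * F s) (𝓝[≠] 1) (𝓝 (L / 2)) := by
  have hderiv : HasDerivAt (fun s : ℂ ↦ 2 * s - 1) 2 1 := by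
    simpa using ((hasDerivAt_id (1 : ℂ)).const_mul 2).sub_const 1
  have hlim := (tendsto_sub_mul_riemannZeta_comp hderiv two_ne_zero (by norm_num)).mul
    ((tendsto_sqrt_pi_mul_Gamma_div_Gamma_mul_cpow (L / π)).mono_left nhdsWithin_le_nhds)
  have hvalue : 1 / 2 * (π * (L / π)) = L / 2 := by
    have hpi : (π : ℂ) ≠ 0 := ofReal_ne_zero.mpr pi_ne_zero
    field_simp
  rw [hvalue] at hlim
  refine hlim.congr fun s ↦ ?_
  rw [hF]
  ring

/-- The stripe zeta density `F(s) = √π ζ(2s−1)(Γ(s−1/2)/Γ(s))(L/π)^{2s−1}` has a simple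
pole at `s = 1` with residue `L/2`: `(s−1)F(s) → L/2` as `s → 1`, `s ≠ 1`. -/
theorem stripe_zeta_residue_at_one (L : ℝ) (hL : 0 < L) (F : ℂ → ℂ)
    (hF : ∀ s : ℂ, F s = ((Real.sqrt π : ℝ) : ℂ) * riemannZeta (2 * s - 1) *
      (Complex.Gamma (s - 1 / 2) / Complex.Gamma s) *
      ((L / π : ℝ) : ℂ) ^ (2 * s - 1)) :
    Tendsto (fun s : ℂ => (s - 1) * F s) (nhdsWithin 1 {(1 : ℂ)}ᶜ)
      (nhds ((L : ℂ) / 2)) :=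
  stripe_zeta_residue_at_one_general L F fun s ↦ by rw [hF, ofReal_div]
end

section
/- Let L > 0 be real and define F(s) = √π · ζ(2s−1) · (Γ(s − 1/2)/Γ(s)) · (L/π)^{2s−1} for complex s. Then (s − 1/2)·F(s) tends to −1/2 as s → 1/2 (s ≠ 1/2); i.e., the residue of F at s = 1/2 equals −1/2. -/
open Real Complex Filter

/-!
The pole at `1/2` comes from the factor `Γ(s - 1/2)`, as `z Γ(z) → 1` when `z → 0`. The remaining
factor is continuous there, because `ζ` is regular at `0` and `1/Γ` is entire, so the residue is the
value of that factor at `1/2`, namely `√π ζ(0) / Γ(1/2) = ζ(0) = -1/2`.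
-/

open scoped Topology

theorem tendsto_sub_mul_Gamma_sub (a : ℂ) :
    Tendsto (fun s : ℂ => (s - a) * Complex.Gamma (s - a)) (𝓝[≠] a) (𝓝 1) := by
  have sub_tendsto : Tendsto (fun s : ℂ => s - a) (𝓝[≠] a) (𝓝[≠] 0) := by
    refine tendsto_nhdsWithin_iff.mpr ⟨?_, ?_⟩
    · exact tendsto_sub_nhds_zero_iff.mpr nhdsWithin_le_nhds
    · filter_upwards [self_mem_nhdsWithin] with s hs using sub_ne_zero.mpr hs
  exact Complex.tendsto_self_mul_Gamma_nhds_zero.comp sub_tendsto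

theorem tendsto_sub_mul_Gamma_sub_mul {g : ℂ → ℂ} {a : ℂ} (hg : ContinuousAt g a) :
    Tendsto (fun s => (s - a) * (Complex.Gamma (s - a) * g s)) (𝓝[≠] a) (𝓝 (g a)) := by
  simpa only [mul_assoc, one_mul] using
    (tendsto_sub_mul_Gamma_sub a).mul (hg.tendsto.mono_left nhdsWithin_le_nhds)

theorem Gamma_one_half_eq_ofReal_sqrt_pi : Complex.Gamma (1 / 2) = (√π : ℝ) := by
  rw [← Real.Gamma_one_half_eq, ← Complex.Gamma_ofReal]
  norm_num

/-- The cofactor of `Γ(s - 1/2)` in the stripe zeta density, with an arbitrary complex base `c` in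
place of `L / π`. The factor `1 / Γ(s)` is written as an inverse, which at the poles of `Γ` takes
the correct value `0` because Mathlib's `Γ` is `0` there. -/
noncomputable def stripeCofactor (c s : ℂ) : ℂ :=
  (√π : ℝ) * riemannZeta (2 * s - 1) * (Complex.Gamma s)⁻¹ * c ^ (2 * s - 1)

theorem continuousAt_stripeCofactor {c s : ℂ} (hc : c ≠ 0) (hs : s ≠ 1) :
    ContinuousAt (stripeCofactor c) s := by
  have affine : ContinuousAt (fun z : ℂ => 2 * z - 1) s := by fun_prop
  have affine_ne_one : 2 * s - 1 ≠ 1 := fun h => hs (by linear_combination h / 2)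
  have zeta : ContinuousAt (fun z => riemannZeta (2 * z - 1)) s :=
    ContinuousAt.comp (f := fun z => 2 * z - 1)
      (differentiableAt_riemannZeta affine_ne_one).continuousAt affine
  have Gamma_inv : ContinuousAt (fun z => (Complex.Gamma z)⁻¹) s :=
    Complex.differentiable_one_div_Gamma.continuous.continuousAt
  have power : ContinuousAt (fun z => c ^ (2 * z - 1)) s := affine.const_cpow (.inl hc)
  exact ((continuousAt_const.mul zeta).mul Gamma_inv).mul power

theorem stripeCofactor_one_half (c : ℂ) : stripeCofactor c (1 / 2) = -(1 / 2) := by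
  have sqrt_pi_ne_zero : ((√π : ℝ) : ℂ) ≠ 0 := ofReal_ne_zero.mpr (Real.sqrt_pos.mpr pi_pos).ne'
  have exponent_eq_zero : 2 * (1 / 2 : ℂ) - 1 = 0 := by norm_num
  rw [stripeCofactor, exponent_eq_zero, riemannZeta_zero, Gamma_one_half_eq_ofReal_sqrt_pi,
    cpow_zero]
  field_simp

theorem stripe_zeta_residue_at_half_general {c : ℂ} (hc : c ≠ 0) :
    Tendsto (fun s : ℂ => (s - 1 / 2) * ((√π : ℝ) * riemannZeta (2 * s - 1) *
      (Complex.Gamma (s - 1 / 2) / Complex.Gamma s) * c ^ (2 * s - 1)))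
      (𝓝[≠] (1 / 2)) (𝓝 (-(1 / 2))) := by
  rw [← stripeCofactor_one_half c]
  refine (tendsto_sub_mul_Gamma_sub_mul
    (continuousAt_stripeCofactor hc (by norm_num))).congr fun s => ?_
  rw [stripeCofactor]
  ring

/-- The stripe zeta density `F(s) = √π ζ(2s−1)(Γ(s−1/2)/Γ(s))(L/π)^{2s−1}` has a simple
pole at `s = 1/2` with residue `−1/2`: `(s−1/2)F(s) → −1/2` as `s → 1/2`, `s ≠ 1/2`. -/
theorem stripe_zeta_residue_at_half (L : ℝ) (hL : 0 < L) (F : ℂ → ℂ)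
    (hF : ∀ s : ℂ, F s = ((Real.sqrt π : ℝ) : ℂ) * riemannZeta (2 * s - 1) *
      (Complex.Gamma (s - 1 / 2) / Complex.Gamma s) *
      ((L / π : ℝ) : ℂ) ^ (2 * s - 1)) :
    Tendsto (fun s : ℂ => (s - 1 / 2) * F s) (nhdsWithin (1 / 2) {(1 / 2 : ℂ)}ᶜ)
      (nhds (-(1 / 2 : ℂ))) := by
  simpa only [hF] using
    stripe_zeta_residue_at_half_general (ofReal_ne_zero.mpr (div_pos hL pi_pos).ne')
end

section
/- Let L > 0 be real and define F(s) = √π · ζ(2s−1) · (Γ(s − 1/2)/Γ(s)) · (L/π)^{2s−1} for complex s. Then F(s)/s tends to π²/(6L) as s → 0 (s ≠ 0). In particular F extends continuously to s = 0 with value F(0) = 0, and the derivative of this extension at 0 equals π²/(6L). -/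
open Real Complex Filter

/-!
The recurrence `1 / Γ(s) = s / Γ(s + 1)` isolates a factor `s` in the zeta density, and the
remaining factor is holomorphic at `0`. The derivative at `0` is therefore the value of that factor
there, which `ζ(-1) = -1/12` and `Γ(-1/2) = -2√π` make explicit.
-/

section Update

variable {𝕜 : Type*} [NontriviallyNormedField 𝕜] {E : Type*} [NormedAddCommGroup E]
  [NormedSpace 𝕜 E]

theorem hasDerivAt_update_self_iff_tendsto [DecidableEq 𝕜] {f : 𝕜 → E} {a : 𝕜} {b f' : E} :
    HasDerivAt (Function.update f a b) f' a ↔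
      Tendsto (fun x => (x - a)⁻¹ • (f x - b)) (nhdsWithin a {a}ᶜ) (nhds f') := by
  rw [hasDerivAt_iff_tendsto_slope]
  refine tendsto_congr' ?_
  filter_upwards [self_mem_nhdsWithin] with x (hx : x ≠ a)
  rw [slope_def_module, Function.update_of_ne hx, Function.update_self]

end Update

theorem riemannZeta_neg_one : riemannZeta (-1) = -1 / 12 := by
  have bernoulli_value := riemannZeta_neg_nat_eq_bernoulli' 1
  rw [bernoulli'_two] at bernoulli_value
  norm_num at bernoulli_value ⊢
  exact bernoulli_value

theorem complexGamma_neg_one_half : Complex.Gamma (-1 / 2) = -2 * (√π : ℝ) := by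
  have recurrence : Complex.Gamma (-1 / 2 + 1) = -1 / 2 * Complex.Gamma (-1 / 2) :=
    Complex.Gamma_add_one _ (by norm_num)
  have gamma_half : Complex.Gamma (-1 / 2 + 1) = (√π : ℝ) := by
    rw [← Real.Gamma_one_half_eq, ← Complex.Gamma_ofReal]
    norm_num
  linear_combination 2 * recurrence - 2 * gamma_half

/-- The zeta function density of the Dirichlet Laplacian on an infinite planar stripe of width `L`,
with the width allowed to be complex and the power taken on its principal branch. -/
noncomputable def stripeZeta (L s : ℂ) : ℂ :=
  (√π : ℝ) * riemannZeta (2 * s - 1) * (Complex.Gamma (s - 1 / 2) / Complex.Gamma s) *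
    (L / π) ^ (2 * s - 1)

/-- The cofactor of `s` in `stripeZeta L s`, in which `1 / Γ(s + 1)` replaces `1 / Γ(s)`. Unlike
`stripeZeta L s / s`, it takes the limiting value at `s = 0`. -/
noncomputable def stripeZetaCofactor (L s : ℂ) : ℂ :=
  (√π : ℝ) * riemannZeta (2 * s - 1) * (Complex.Gamma (s - 1 / 2) * (Complex.Gamma (s + 1))⁻¹) *
    (L / π) ^ (2 * s - 1)

/-- At `s = 0` this relies on the convention `Γ(0) = 0`, which makes `1 / Γ` the entire function. -/
theorem stripeZeta_eq_self_mul_cofactor (L s : ℂ) :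
    stripeZeta L s = s * stripeZetaCofactor L s := by
  rw [stripeZeta, stripeZetaCofactor, div_eq_mul_inv (Complex.Gamma _),
    Complex.one_div_Gamma_eq_self_mul_one_div_Gamma_add_one s]
  ring

theorem differentiableAt_stripeZetaCofactor {L s : ℂ} (hL : L ≠ 0) (hs : s ≠ 1)
    (hsΓ : ∀ m : ℕ, s - 1 / 2 ≠ -m) : DifferentiableAt ℂ (stripeZetaCofactor L) s := by
  have zeta_factor : DifferentiableAt ℂ (fun z : ℂ => riemannZeta (2 * z - 1)) s := by
    have pole_avoided : 2 * s - 1 ≠ 1 := fun h => hs (by linear_combination h / 2)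
    exact (differentiableAt_riemannZeta pole_avoided).comp s (by fun_prop)
  have gamma_factor : DifferentiableAt ℂ (fun z : ℂ => Complex.Gamma (z - 1 / 2)) s :=
    (Complex.differentiableAt_Gamma _ hsΓ).comp s (by fun_prop)
  have inv_gamma_factor : DifferentiableAt ℂ (fun z : ℂ => (Complex.Gamma (z + 1))⁻¹) s :=
    (Complex.differentiable_one_div_Gamma _).comp s (by fun_prop)
  have power_factor : DifferentiableAt ℂ (fun z : ℂ => (L / π) ^ (2 * z - 1)) s :=
    DifferentiableAt.const_cpow (by fun_prop) (.inl (div_ne_zero hL (ofReal_ne_zero.2 pi_ne_zero)))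
  exact ((zeta_factor.const_mul _).mul (gamma_factor.mul inv_gamma_factor)).mul power_factor

theorem stripeZetaCofactor_zero (L : ℂ) : stripeZetaCofactor L 0 = π ^ 2 / (6 * L) := by
  have sqrt_pi_sq : ((√π : ℝ) : ℂ) ^ 2 = π := by
    rw [← ofReal_pow, Real.sq_sqrt pi_pos.le]
  calc stripeZetaCofactor L 0
      = (√π : ℝ) * riemannZeta (-1) * (Complex.Gamma (-1 / 2) * (Complex.Gamma 1)⁻¹) *
          (L / π) ^ (-1 : ℂ) := by
        norm_num [stripeZetaCofactor]
    _ = ((√π : ℝ) : ℂ) ^ 2 / 6 * (π / L) := by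
        rw [riemannZeta_neg_one, complexGamma_neg_one_half, Complex.Gamma_one, cpow_neg_one,
          inv_div]
        ring
    _ = π ^ 2 / (6 * L) := by
        rw [sqrt_pi_sq]
        ring

theorem tendsto_stripeZeta_div_self {L : ℂ} (hL : L ≠ 0) :
    Tendsto (fun s => stripeZeta L s / s) (nhdsWithin 0 {0}ᶜ) (nhds (π ^ 2 / (6 * L))) := by
  have neg_half_ne_neg_nat (m : ℕ) : (0 - 1 / 2 : ℂ) ≠ -m := by
    intro h
    have two_mul_eq_one : ((2 * m : ℕ) : ℂ) = (1 : ℕ) := by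
      push_cast
      linear_combination 2 * h
    have := Nat.cast_injective two_mul_eq_one
    omega
  have cofactor_tendsto :=
    (differentiableAt_stripeZetaCofactor hL zero_ne_one neg_half_ne_neg_nat).continuousAt.tendsto
  rw [stripeZetaCofactor_zero] at cofactor_tendsto
  refine (cofactor_tendsto.mono_left nhdsWithin_le_nhds).congr' ?_
  filter_upwards [self_mem_nhdsWithin] with s (hs : s ≠ 0)
  rw [stripeZeta_eq_self_mul_cofactor, mul_div_cancel_left₀ _ hs]

theorem stripe_zeta_derivative_at_zero_general {L : ℂ} (hL : L ≠ 0) :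
    Tendsto (fun s => stripeZeta L s / s) (nhdsWithin 0 {0}ᶜ) (nhds (π ^ 2 / (6 * L))) ∧
      HasDerivAt (Function.update (stripeZeta L) 0 0) (π ^ 2 / (6 * L)) 0 := by
  refine ⟨tendsto_stripeZeta_div_self hL, hasDerivAt_update_self_iff_tendsto.2 ?_⟩
  simpa only [sub_zero, smul_eq_mul, inv_mul_eq_div] using tendsto_stripeZeta_div_self hL

/-- The stripe zeta density `F(s) = √π ζ(2s−1)(Γ(s−1/2)/Γ(s))(L/π)^{2s−1}` satisfies
`F(s)/s → π²/(6L)` as `s → 0`, `s ≠ 0`; hence the extension of `F` with value `0` at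
`s = 0` is differentiable at `0` with derivative `π²/(6L)`. -/
theorem stripe_zeta_derivative_at_zero (L : ℝ) (hL : 0 < L) (F : ℂ → ℂ)
    (hF : ∀ s : ℂ, F s = ((Real.sqrt π : ℝ) : ℂ) * riemannZeta (2 * s - 1) *
      (Complex.Gamma (s - 1 / 2) / Complex.Gamma s) *
      ((L / π : ℝ) : ℂ) ^ (2 * s - 1)) :
    Tendsto (fun s : ℂ => F s / s) (nhdsWithin 0 {(0 : ℂ)}ᶜ)
        (nhds ((π ^ 2 / (6 * L) : ℝ) : ℂ)) ∧
      HasDerivAt (Function.update F 0 0) ((π ^ 2 / (6 * L) : ℝ) : ℂ) 0 := by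
  obtain rfl : F = stripeZeta L := funext fun s => by rw [hF, stripeZeta, ofReal_div]
  exact_mod_cast stripe_zeta_derivative_at_zero_general (ofReal_ne_zero.2 hL.ne')
end

section
/- Let L > 0 be real and define F(s) = √π · ζ(2s−1) · (Γ(s − 1/2)/Γ(s)) · (L/π)^{2s−1} for complex s. Then (s + 1/2)·F(s) tends to 0 as s → −1/2 (s ∉ {−1/2}); that is, the simple pole of Γ(s − 1/2) at s = −1/2 is cancelled by the trivial zero ζ(−2) = 0, so F has zero residue at s = −1/2. -/
open Real Complex Filter

/-!
The residues of `F` at `s = -1/2 - n` vanish for one and the same reason, for all `n : ℕ`: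
`Γ(s - 1/2)` has a simple pole there, so `(s + 1/2 + n) Γ(s - 1/2)` stays bounded, while
`ζ(2s - 1)` tends to the trivial zero `ζ(-2(n + 1)) = 0`, and `1 / Γ(s)` and the power of `L / π`
are entire in `s`. The theorem is the case `n = 0`.
-/

open scoped Topology Nat

theorem tendsto_add_const_nhdsNE {G : Type*} [TopologicalSpace G] [AddGroup G]
    [SeparatelyContinuousAdd G] (a c : G) : Tendsto (· + c) (𝓝[≠] a) (𝓝[≠] (a + c)) :=
  ((Homeomorph.addRight c).map_punctured_nhds_eq a).le

theorem tendsto_add_nat_mul_Gamma_nhdsNE_neg_nat (n : ℕ) :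
    Tendsto (fun z : ℂ ↦ (z + n) * Complex.Gamma z) (𝓝[≠] (-n : ℂ)) (𝓝 ((-1) ^ n / n !)) := by
  induction n with
  | zero => simpa using Complex.tendsto_self_mul_Gamma_nhds_zero
  | succ n ih =>
    have neg_succ_ne_zero : -((n + 1 : ℕ) : ℂ) ≠ 0 :=
      neg_ne_zero.2 (Nat.cast_ne_zero.2 n.succ_ne_zero)
    have shift : Tendsto (· + 1) (𝓝[≠] (-((n + 1 : ℕ) : ℂ))) (𝓝[≠] (-n : ℂ)) := by
      simpa using tendsto_add_const_nhdsNE (-((n + 1 : ℕ) : ℂ)) 1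
    have functional_equation : ∀ z : ℂ, z ≠ 0 →
        (z + 1 + n) * Complex.Gamma (z + 1) / z = (z + (n + 1 : ℕ)) * Complex.Gamma z := by
      intro z hz
      rw [Complex.Gamma_add_one z hz]
      push_cast
      field_simp
      ring
    have residue_eq : (-1 : ℂ) ^ n / n ! / -((n + 1 : ℕ) : ℂ) = (-1) ^ (n + 1) / (n + 1)! := by
      rw [Nat.factorial_succ, Nat.cast_mul, pow_succ]
      field_simp
    rw [← residue_eq]
    have id_tendsto : Tendsto id (𝓝[≠] (-((n + 1 : ℕ) : ℂ))) (𝓝 (-((n + 1 : ℕ) : ℂ))) :=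
      nhdsWithin_le_nhds
    refine ((ih.comp shift).div id_tendsto neg_succ_ne_zero).congr' ?_
    filter_upwards [nhdsWithin_le_nhds (isOpen_ne.mem_nhds neg_succ_ne_zero)] with z hz
    exact functional_equation z hz

theorem tendsto_mul_Gamma_sub_half_nhdsNE_neg_half_sub_nat (n : ℕ) :
    Tendsto (fun s : ℂ ↦ (s + 1 / 2 + n) * Complex.Gamma (s - 1 / 2)) (𝓝[≠] (-(1 / 2) - n))
      (𝓝 ((-1) ^ (n + 1) / (n + 1)!)) := by
  have shift : Tendsto (· + (-(1 / 2))) (𝓝[≠] (-(1 / 2) - n : ℂ))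
      (𝓝[≠] (-((n + 1 : ℕ) : ℂ))) := by
    have image_eq : -((n + 1 : ℕ) : ℂ) = -(1 / 2) - n + -(1 / 2) := by
      push_cast
      ring
    simpa only [image_eq] using tendsto_add_const_nhdsNE (-(1 / 2) - n : ℂ) (-(1 / 2))
  refine ((tendsto_add_nat_mul_Gamma_nhdsNE_neg_nat (n + 1)).comp shift).congr fun s ↦ ?_
  simp only [Function.comp_apply, ← sub_eq_add_neg]
  push_cast
  ring

theorem tendsto_riemannZeta_nhds_neg_two_mul_nat_add_one (n : ℕ) :
    Tendsto riemannZeta (𝓝 (-2 * (n + 1))) (𝓝 0) := by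
  have ne_one : (-2 * (n + 1) : ℂ) ≠ 1 := by
    norm_cast
    lia
  simpa only [riemannZeta_neg_two_mul_nat_add_one] using
    (differentiableAt_riemannZeta ne_one).continuousAt.tendsto

theorem tendsto_riemannZeta_two_mul_sub_one_nhds_neg_half_sub_nat (n : ℕ) :
    Tendsto (fun s : ℂ ↦ riemannZeta (2 * s - 1)) (𝓝 (-(1 / 2) - n)) (𝓝 0) :=
  (tendsto_riemannZeta_nhds_neg_two_mul_nat_add_one n).comp
    (Continuous.tendsto' (by fun_prop) _ _ (by ring))

/-- The zeta function density of the Dirichlet Laplacian on an infinite planar stripe of width `L`.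
The width may be any complex number, the power being the principal one. -/
noncomputable def stripeZetaDensity (L s : ℂ) : ℂ :=
  √π * riemannZeta (2 * s - 1) * (Complex.Gamma (s - 1 / 2) / Complex.Gamma s) *
    (L / π) ^ (2 * s - 1)

theorem stripe_zeta_residue_at_minus_half_general {L : ℂ} (hL : L ≠ 0) (n : ℕ) :
    Tendsto (fun s ↦ (s + 1 / 2 + n) * stripeZetaDensity L s) (𝓝[≠] (-(1 / 2) - n)) (𝓝 0) := by
  have width_ne_zero : L / π ≠ 0 := div_ne_zero hL (ofReal_ne_zero.2 pi_ne_zero)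
  have inv_Gamma_continuous := Complex.differentiable_one_div_Gamma.continuous
  have power_continuous : Continuous fun s : ℂ ↦ (L / π) ^ (2 * s - 1) :=
    Continuous.const_cpow (by fun_prop) (.inl width_ne_zero)
  have regular_part_tendsto : Tendsto (fun s : ℂ ↦ √π * riemannZeta (2 * s - 1) *
      (Complex.Gamma s)⁻¹ * (L / π) ^ (2 * s - 1)) (𝓝 (-(1 / 2) - n)) (𝓝 0) := by
    simpa only [mul_zero, zero_mul] using
      (((tendsto_riemannZeta_two_mul_sub_one_nhds_neg_half_sub_nat n).const_mul (√π : ℂ)).mul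
        (inv_Gamma_continuous.tendsto _)).mul (power_continuous.tendsto _)
  have product_tendsto := (tendsto_mul_Gamma_sub_half_nhdsNE_neg_half_sub_nat n).mul
    (regular_part_tendsto.mono_left nhdsWithin_le_nhds)
  rw [mul_zero] at product_tendsto
  refine product_tendsto.congr fun s ↦ ?_
  rw [stripeZetaDensity]
  ring

/-- The stripe zeta density `F(s) = √π ζ(2s−1)(Γ(s−1/2)/Γ(s))(L/π)^{2s−1}` has vanishing
residue at `s = −1/2`: `(s+1/2)F(s) → 0` as `s → −1/2`, `s ≠ −1/2`. -/
theorem stripe_zeta_residue_at_minus_half (L : ℝ) (hL : 0 < L) (F : ℂ → ℂ)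
    (hF : ∀ s : ℂ, F s = ((Real.sqrt π : ℝ) : ℂ) * riemannZeta (2 * s - 1) *
      (Complex.Gamma (s - 1 / 2) / Complex.Gamma s) *
      ((L / π : ℝ) : ℂ) ^ (2 * s - 1)) :
    Tendsto (fun s : ℂ => (s + 1 / 2) * F s)
      (nhdsWithin (-(1 / 2)) {(-(1 / 2) : ℂ)}ᶜ) (nhds 0) := by
  simpa [hF, stripeZetaDensity] using
    stripe_zeta_residue_at_minus_half_general (ofReal_ne_zero.2 hL.ne') 0
end

section
/- Let L > 0 be real and let s > 1 be a real number. Then lim_{R → ∞} (1/R) · ∑_{k ∈ ℤ} ∑_{n=1}^∞ ((k/R)² + (nπ/L)²)^{−s} = ∑_{n=1}^∞ ∫_{−∞}^∞ (x² + (nπ/L)²)^{−s} dx, where the limit is over positive reals R → ∞. -/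
open Real Filter

/-!
For a nonnegative even function `g` decreasing on `[0, ∞)`, the integral test on each half-line
shows that `∑ k : ℤ, g k` and `∫ g` differ by at most `g 0`. This error bound is additive, so it
survives summation over a family of such functions, and replacing each `g` by `x ↦ g (x / R)` turns
it into a bound of order `1 / R` for the Riemann sums of mesh `1 / R`. For the family
`x ↦ (x² + aᵢ²)^(-s)` the integrals and the values at `0` are, up to a factor independent of `i`,
the powers `aᵢ^(1 - 2s)` and `aᵢ^(-2s)`, and these are summable as soon as the former are.
-/

open MeasureTheory Set

/-- Symmetric decreasing functions on the line, normalised to be nonnegative: the class of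
functions whose sum over `ℤ` is compared with their integral. -/
structure IsSymmDecreasing (g : ℝ → ℝ) : Prop where
  even : g.Even
  antitoneOn : AntitoneOn g (Ici 0)
  nonneg : ∀ x, 0 ≤ g x

theorem integral_eq_two_mul_integral_Ioi_of_even {g : ℝ → ℝ} (hg : g.Even) :
    ∫ x, g x = 2 * ∫ x in Ioi 0, g x := by
  have apply_abs (x : ℝ) : g |x| = g x := by
    rcases abs_choice x with h | h <;> simp only [h, hg x]
  simpa only [apply_abs] using integral_comp_abs (f := g)

namespace IsSymmDecreasing

variable {g : ℝ → ℝ}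

theorem comp_div (hg : IsSymmDecreasing g) {R : ℝ} (hR : 0 < R) :
    IsSymmDecreasing fun x ↦ g (x / R) where
  even x := by simp only [neg_div, hg.even (x / R)]
  antitoneOn _ hx _ hy hxy :=
    hg.antitoneOn (div_nonneg hx hR.le) (div_nonneg hy hR.le) (by gcongr)
  nonneg _ := hg.nonneg _

theorem summable_nat (hg : IsSymmDecreasing g) (hint : Integrable g) :
    Summable fun n : ℕ ↦ g n :=
  hg.antitoneOn.summable_of_integrableOn_Ioi_zero hint.integrableOn fun _ _ ↦ hg.nonneg _

theorem hasSum_int (hg : IsSymmDecreasing g) (hint : Integrable g) :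
    HasSum (fun k : ℤ ↦ g k) (∑' n : ℕ, g n + ∑' n : ℕ, g (n + 1 : ℕ)) := by
  have hnat := hg.summable_nat hint
  have apply_neg (n : ℕ) : g ((-(n + 1) : ℤ) : ℝ) = g (n + 1 : ℕ) := by
    rw [← hg.even]
    push_cast
    rw [neg_neg]
  refine HasSum.of_nat_of_neg_add_one (by simpa using hnat.hasSum) ?_
  simpa only [apply_neg] using ((summable_nat_add_iff 1).2 hnat).hasSum

theorem abs_tsum_int_sub_integral_le (hg : IsSymmDecreasing g) (hint : Integrable g) :
    |∑' k : ℤ, g k - ∫ x, g x| ≤ g 0 := by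
  have hnat := hg.summable_nat hint
  have upper : ∑' n : ℕ, g (n + 1 : ℕ) ≤ ∫ x in Ioi 0, g x :=
    hg.antitoneOn.tsum_add_one_le_integral hint.integrableOn fun _ _ ↦ hg.nonneg _
  have lower : ∫ x in Ioi 0, g x ≤ ∑' n : ℕ, g n :=
    hg.antitoneOn.integral_le_tsum hnat fun _ _ ↦ hg.nonneg _
  have split : ∑' n : ℕ, g n = g 0 + ∑' n : ℕ, g (n + 1 : ℕ) := by
    simpa only [Nat.cast_zero] using hnat.tsum_eq_zero_add
  rw [(hg.hasSum_int hint).tsum_eq, integral_eq_two_mul_integral_Ioi_of_even hg.even, abs_le]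
  constructor <;> linarith

section Family

variable {ι : Type*} {F : ι → ℝ → ℝ}

theorem summable_uncurry_int (hF : ∀ i, IsSymmDecreasing (F i)) (hint : ∀ i, Integrable (F i))
    (hF₀ : Summable fun i ↦ F i 0) (hFI : Summable fun i ↦ ∫ x, F i x) :
    Summable (Function.uncurry fun i (k : ℤ) ↦ F i k) := by
  refine (summable_prod_of_nonneg fun p ↦ (hF p.1).nonneg (p.2 : ℤ)).2
    ⟨fun i ↦ ((hF i).hasSum_int (hint i)).summable, ?_⟩
  refine (hF₀.add hFI).of_nonneg_of_le (fun i ↦ tsum_nonneg fun k : ℤ ↦ (hF i).nonneg k) fun i ↦ ?_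
  exact sub_le_iff_le_add.1 (le_of_abs_le ((hF i).abs_tsum_int_sub_integral_le (hint i)))

theorem abs_tsum_int_tsum_sub_tsum_integral_le (hF : ∀ i, IsSymmDecreasing (F i))
    (hint : ∀ i, Integrable (F i)) (hF₀ : Summable fun i ↦ F i 0)
    (hFI : Summable fun i ↦ ∫ x, F i x) :
    |∑' (k : ℤ) (i), F i k - ∑' i, ∫ x, F i x| ≤ ∑' i, F i 0 := by
  have hprod := summable_uncurry_int hF hint hF₀ hFI
  have hFZ : Summable fun i ↦ ∑' k : ℤ, F i k := hprod.prod
  calc |∑' (k : ℤ) (i), F i k - ∑' i, ∫ x, F i x|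
      = |∑' i, (∑' k : ℤ, F i k - ∫ x, F i x)| := by
        rw [hFZ.tsum_sub hFI, hprod.tsum_comm]
    _ ≤ ∑' i, F i 0 := by
        rw [← norm_eq_abs]
        exact tsum_of_norm_bounded hF₀.hasSum fun i ↦
          (hF i).abs_tsum_int_sub_integral_le (hint i)

theorem abs_riemannSum_sub_tsum_integral_le (hF : ∀ i, IsSymmDecreasing (F i))
    (hint : ∀ i, Integrable (F i)) (hF₀ : Summable fun i ↦ F i 0)
    (hFI : Summable fun i ↦ ∫ x, F i x) {R : ℝ} (hR : 0 < R) :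
    |1 / R * ∑' (k : ℤ) (i), F i (k / R) - ∑' i, ∫ x, F i x| ≤ (∑' i, F i 0) / R := by
  have integral_scaled (i : ι) : ∫ x, F i (x / R) = R * ∫ x, F i x := by
    rw [Measure.integral_comp_div, abs_of_pos hR, smul_eq_mul]
  have unit_mesh := abs_tsum_int_tsum_sub_tsum_integral_le (fun i ↦ (hF i).comp_div hR)
    (fun i ↦ (hint i).comp_div hR.ne') (by simpa only [zero_div] using hF₀)
    (by simpa only [integral_scaled] using hFI.mul_left R)
  simp only [integral_scaled, tsum_mul_left, zero_div] at unit_mesh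
  calc |1 / R * ∑' (k : ℤ) (i), F i (k / R) - ∑' i, ∫ x, F i x|
      = |∑' (k : ℤ) (i), F i (k / R) - R * ∑' i, ∫ x, F i x| / R := by
        rw [← abs_of_pos hR, ← abs_div, abs_of_pos hR, sub_div, mul_div_cancel_left₀ _ hR.ne',
          one_div_mul_eq_div]
    _ ≤ (∑' i, F i 0) / R := by gcongr

theorem tendsto_riemannSum_tsum_integral (hF : ∀ i, IsSymmDecreasing (F i))
    (hint : ∀ i, Integrable (F i)) (hF₀ : Summable fun i ↦ F i 0)
    (hFI : Summable fun i ↦ ∫ x, F i x) :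
    Tendsto (fun R : ℝ ↦ 1 / R * ∑' (k : ℤ) (i), F i (k / R)) atTop
      (nhds (∑' i, ∫ x, F i x)) := by
  have error_tendsto : Tendsto (fun R : ℝ ↦ (∑' i, F i 0) / R) atTop (nhds 0) :=
    tendsto_const_nhds.div_atTop tendsto_id
  refine tendsto_iff_dist_tendsto_zero.2
    (squeeze_zero' (Eventually.of_forall fun _ ↦ dist_nonneg) ?_ error_tendsto)
  filter_upwards [eventually_gt_atTop 0] with R hR
  exact abs_riemannSum_sub_tsum_integral_le hF hint hF₀ hFI hR

end Family

end IsSymmDecreasing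

section SqAddSqRpow

variable {s a : ℝ}

theorem isSymmDecreasing_sq_add_sq_rpow_neg (hs : 0 ≤ s) (ha : 0 < a) :
    IsSymmDecreasing fun x ↦ (x ^ 2 + a ^ 2) ^ (-s) where
  even x := by simp only [neg_sq]
  antitoneOn x (hx : 0 ≤ x) y _ hxy :=
    rpow_le_rpow_of_nonpos (by positivity) (by gcongr) (neg_nonpos.2 hs)
  nonneg x := by positivity

theorem sq_rpow_neg (s : ℝ) (ha : 0 ≤ a) : (a ^ 2) ^ (-s) = a ^ (-(2 * s)) := by
  rw [← rpow_natCast_mul ha, Nat.cast_ofNat, mul_neg]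

theorem sq_add_sq_rpow_neg_eq_mul (s : ℝ) (ha : 0 < a) (x : ℝ) :
    (x ^ 2 + a ^ 2) ^ (-s) = a ^ (-(2 * s)) * (1 + (x / a) ^ 2) ^ (-s) := by
  have factor : x ^ 2 + a ^ 2 = a ^ 2 * (1 + (x / a) ^ 2) := by
    field_simp
    ring
  rw [factor, mul_rpow (by positivity) (by positivity), sq_rpow_neg s ha.le]

theorem integrable_one_add_sq_rpow_neg (hs : 1 / 2 < s) :
    Integrable fun x : ℝ ↦ (1 + x ^ 2) ^ (-s) := by
  have bracket := integrable_rpow_neg_one_add_norm_sq (E := ℝ) (μ := volume) (r := 2 * s)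
    (by rw [Module.finrank_self, Nat.cast_one]; linarith)
  simpa only [norm_eq_abs, sq_abs, neg_div, mul_div_cancel_left₀ s two_ne_zero] using bracket

theorem integrable_sq_add_sq_rpow_neg (hs : 1 / 2 < s) (ha : 0 < a) :
    Integrable fun x : ℝ ↦ (x ^ 2 + a ^ 2) ^ (-s) := by
  simp only [sq_add_sq_rpow_neg_eq_mul s ha]
  exact ((integrable_one_add_sq_rpow_neg hs).comp_div ha.ne').const_mul _

theorem integral_sq_add_sq_rpow_neg (s : ℝ) (ha : 0 < a) :
    ∫ x : ℝ, (x ^ 2 + a ^ 2) ^ (-s) = a ^ (1 - 2 * s) * ∫ x : ℝ, (1 + x ^ 2) ^ (-s) := by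
  simp only [sq_add_sq_rpow_neg_eq_mul s ha]
  rw [integral_const_mul, Measure.integral_comp_div (fun x : ℝ ↦ (1 + x ^ 2) ^ (-s)),
    abs_of_pos ha, smul_eq_mul, ← mul_assoc, ← rpow_add_one ha.ne', neg_add_eq_sub]

end SqAddSqRpow

theorem summable_rpow_of_one_le {ι : Type*} {f : ι → ℝ} {p : ℝ} (hf : Summable f)
    (hf₀ : ∀ i, 0 ≤ f i) (hp : 1 ≤ p) : Summable fun i ↦ f i ^ p := by
  refine hf.of_norm_bounded_eventually ?_
  filter_upwards [hf.tendsto_cofinite_zero.eventually_le_const one_pos] with i hi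
  rw [norm_of_nonneg (rpow_nonneg (hf₀ i) p)]
  exact rpow_le_self_of_le_one (hf₀ i) hi hp

theorem summable_rpow_of_le_of_neg {ι : Type*} {a : ι → ℝ} {p q : ℝ} (ha : ∀ i, 0 ≤ a i)
    (hpq : p ≤ q) (hq : q < 0) (h : Summable fun i ↦ a i ^ q) : Summable fun i ↦ a i ^ p := by
  have hpow := summable_rpow_of_one_le h (fun i ↦ rpow_nonneg (ha i) q)
    ((one_le_div_of_neg hq).2 hpq)
  simpa only [← rpow_mul (ha _), mul_div_cancel₀ p hq.ne] using hpow

theorem summable_nat_add_one_mul_div_rpow {b c p : ℝ} (hb : 0 ≤ b) (hc : 0 ≤ c) (hp : p < -1) :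
    Summable fun n : ℕ ↦ (((n : ℝ) + 1) * b / c) ^ p := by
  refine (((summable_nat_add_iff 1).2 (summable_nat_rpow.2 hp)).mul_right ((b / c) ^ p)).congr
    fun n ↦ ?_
  rw [mul_div_assoc, mul_rpow (by positivity) (by positivity), Nat.cast_add_one]

theorem cylinder_zeta_density_limit_general {ι : Type*} {a : ι → ℝ} (ha : ∀ i, 0 < a i) {s : ℝ}
    (hs : 1 / 2 < s) (hsum : Summable fun i ↦ a i ^ (1 - 2 * s)) :
    Tendsto (fun R : ℝ ↦ 1 / R * ∑' (k : ℤ) (i), ((k / R) ^ 2 + a i ^ 2) ^ (-s)) atTop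
      (nhds (∑' i, ∫ x : ℝ, (x ^ 2 + a i ^ 2) ^ (-s))) := by
  refine IsSymmDecreasing.tendsto_riemannSum_tsum_integral (F := fun i x ↦ (x ^ 2 + a i ^ 2) ^ (-s))
    (fun i ↦ isSymmDecreasing_sq_add_sq_rpow_neg (by linarith) (ha i))
    (fun i ↦ integrable_sq_add_sq_rpow_neg hs (ha i)) ?values_at_zero ?integrals
  case values_at_zero =>
    simp only [zero_pow two_ne_zero, zero_add, sq_rpow_neg s (ha _).le]
    exact summable_rpow_of_le_of_neg (fun i ↦ (ha i).le) (by linarith) (by linarith) hsum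
  case integrals =>
    simp only [integral_sq_add_sq_rpow_neg s (ha _)]
    exact hsum.mul_right _

/-- The zeta function density of the flat cylinder: for real `s > 1`,
`(1/R)∑_{k∈ℤ}∑_{n≥1} ((k/R)² + (nπ/L)²)^{−s}` tends, as `R → ∞`, to
`∑_{n≥1} ∫_ℝ (x² + (nπ/L)²)^{−s} dx`. -/
theorem cylinder_zeta_density_limit (L : ℝ) (hL : 0 < L) (s : ℝ) (hs : 1 < s) :
    Tendsto (fun R : ℝ => (1 / R) *
        ∑' (k : ℤ) (n : ℕ),
          (((k : ℝ) / R) ^ 2 + (((n : ℝ) + 1) * π / L) ^ 2) ^ (-s))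
      atTop
      (nhds (∑' n : ℕ,
        ∫ x : ℝ, (x ^ 2 + (((n : ℝ) + 1) * π / L) ^ 2) ^ (-s))) :=
  cylinder_zeta_density_limit_general (fun _ ↦ by positivity) (by linarith)
    (summable_nat_add_one_mul_div_rpow pi_pos.le hL.le (by linarith))
end
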